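/- Suppose G and H are finite binary structures such that: (1) ∃ has a winning strategy in the colouring game G^{c+3}_ω(G,H); (2) every partial homomorphism of H to itself of size two extends to a full homomorphism from H into itself; and (3) there are distinct i, i' ∈ G and j, j' ∈ H such that {(i,j),(i',j')} is a partial homomorphism from G to H that does not extend to a homomorphism G → H. Then the class RRA of representable relation algebras is not the class of models of any first-order theory in the language of relation algebras using only the variables x_0,...,x_{c-1}. -/

import Mathlib

/-! ## Binary structures -/

/-- A binary structure: a carrier set together with a family of binary relations
indexed by a signature `σ` consisting of binary predicate symbols. -/
structure BinStruct (σ : Type) : Type 1 where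
  V : Type
  rel : σ → V → V → Prop

variable {σ : Type}

/-- The partial map `{(i,j),(i',j')}` is a partial homomorphism from `G` to `H`:
for all distinct elements of the domain and every binary predicate, the predicate
is preserved. -/
def PartialHom2 (G H : BinStruct σ) (i i' : G.V) (j j' : H.V) : Prop :=
  ∀ b : σ, (G.rel b i i' → H.rel b j j') ∧ (G.rel b i' i → H.rel b j' j)

/-- `f` is a (total) homomorphism from `G` to `H`. -/
def IsHom (G H : BinStruct σ) (f : G.V → H.V) : Prop :=
  ∀ (b : σ) (u v : G.V), u ≠ v → G.rel b u v → H.rel b (f u) (f v)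

/-! ## The rainbow atom structure -/

/-- Atoms of the rainbow relation algebra `B_{G,H}`. -/
inductive RbAtom (α β : Type) : Type
  | id : RbAtom α β
  | black : RbAtom α β
  | white : RbAtom α β
  | yellow : RbAtom α β
  | green (i : α) : RbAtom α β
  | red (j j' : β) : RbAtom α β

namespace RbAtom

/-- Converse of an atom: all atoms are self-converse except `(red j j')⌣ = red j' j`. -/
def conv {α β : Type} : RbAtom α β → RbAtom α β
  | red j j' => red j' j
  | a => a

end RbAtom

/-- The generating forbidden triples (I)–(VI) of the rainbow algebra `B_{G,H}`. -/
inductive BaseForbidden (G H : BinStruct σ) :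
    RbAtom G.V H.V → RbAtom G.V H.V → RbAtom G.V H.V → Prop
  | ident (a b : RbAtom G.V H.V) : a ≠ b → BaseForbidden G H .id a b
  | ggg (i i' i'' : G.V) : BaseForbidden G H (.green i) (.green i') (.green i'')
  | ggw (i i' : G.V) : BaseForbidden G H (.green i) (.green i') .white
  | yyy : BaseForbidden G H .yellow .yellow .yellow
  | yyb : BaseForbidden G H .yellow .yellow .black
  | rrr (j₁ j₂ j₂' j₃' j₁s j₃s : H.V) : ¬(j₁ = j₁s ∧ j₂ = j₂' ∧ j₃' = j₃s) →
      BaseForbidden G H (.red j₁ j₂) (.red j₂' j₃') (.red j₁s j₃s)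
  | ggr (i i' : G.V) (j j' : H.V) : ¬(i ≠ i' ∧ PartialHom2 G H i i' j j') →
      BaseForbidden G H (.green i) (.green i') (.red j j')

/-- A triple of atoms is forbidden if it is a Peircean transform of one of the
generating forbidden triples. -/
def Forbidden (G H : BinStruct σ) (a b c : RbAtom G.V H.V) : Prop :=
  ∃ x y z : RbAtom G.V H.V, BaseForbidden G H x y z ∧
    ((a, b, c) = (x, y, z) ∨ (a, b, c) = (x.conv, z, y) ∨ (a, b, c) = (z, y.conv, x) ∨
     (a, b, c) = (y.conv, x.conv, z.conv) ∨ (a, b, c) = (y, z.conv, x.conv) ∨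
     (a, b, c) = (z.conv, x, y.conv))

/-! ## The rainbow relation algebra (complex algebra of the atom structure) -/

/-- Composition in the complex algebra: `c ≤ X ; Y` iff there are `a ∈ X`, `b ∈ Y`
such that the triple `(a, b, c)` is not forbidden. -/
def rbComp (G H : BinStruct σ) (X Y : Set (RbAtom G.V H.V)) : Set (RbAtom G.V H.V) :=
  {c | ∃ a ∈ X, ∃ b ∈ Y, ¬ Forbidden G H a b c}

/-- Converse in the complex algebra. -/
def rbConv {α β : Type} (X : Set (RbAtom α β)) : Set (RbAtom α β) :=
  {a | RbAtom.conv a ∈ X}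

/-- The rainbow relation algebra `B_{G,H}` is completely representable: there is an
isomorphism onto an algebra of binary relations on some base set (with union,
complement, relational composition, converse and the identity relation) carrying
all suprema to unions. -/
def CompletelyRepresentable (G H : BinStruct σ) : Prop :=
  ∃ (X : Type) (θ : Set (RbAtom G.V H.V) → Set (X × X)),
    Function.Injective θ ∧
    (∀ S : Set (Set (RbAtom G.V H.V)), θ (⋃₀ S) = ⋃₀ (θ '' S)) ∧
    (∀ A : Set (RbAtom G.V H.V), θ Aᶜ = θ Set.univ \ θ A) ∧
    (∀ A B : Set (RbAtom G.V H.V),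
        θ (rbComp G H A B) = {p : X × X | ∃ z : X, (p.1, z) ∈ θ A ∧ (z, p.2) ∈ θ B}) ∧
    (∀ A : Set (RbAtom G.V H.V), θ (rbConv A) = {p : X × X | (p.2, p.1) ∈ θ A}) ∧
    θ {RbAtom.id} = {p : X × X | p.1 = p.2}

/-! ## The colouring game -/

/-- The set of vertices coloured (according to the interpretation `g`) with exactly
the colours in a palette `π`. -/
def PaletteSet {V : Type} {c : ℕ} (g : Fin c → Set V) (π : Set (Fin c)) : Set V :=
  {x | ∀ t : Fin c, x ∈ g t ↔ t ∈ π}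

/-- The position `(g,h)` of the `c`-colour colouring game on `(G,H)` is an immediate
win for ∀: (C1) some palette is realised in exactly one of the two structures, or
(C2) some pair of palettes and binary predicate produce a nonempty intersection in
exactly one of the two structures. -/
def ColWin (G H : BinStruct σ) (c : ℕ)
    (g : Fin c → Set G.V) (h : Fin c → Set H.V) : Prop :=
  (∃ π : Set (Fin c), Xor' (PaletteSet g π = ∅) (PaletteSet h π = ∅)) ∨
  (∃ (π π' : Set (Fin c)) (b : σ),
      Xor' ((PaletteSet g π ×ˢ PaletteSet g π') ∩ {q | G.rel b q.1 q.2} = ∅)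
           ((PaletteSet h π ×ˢ PaletteSet h π') ∩ {q | H.rel b q.1 q.2} = ∅))

/-- `∃` has a winning strategy in the infinitely long `c`-colour colouring game
`G^c_ω(G,H)` starting from the position `(g,h)`: there is an invariant family of safe
positions containing `(g,h)`, avoiding wins for `∀`, such that every move of `∀`
(a colour together with a set of vertices of either structure) has a response by `∃`
(a set of vertices of the other structure) staying in the family. -/
def ExSurvives (G H : BinStruct σ) (c : ℕ)
    (g : Fin c → Set G.V) (h : Fin c → Set H.V) : Prop :=
  ∃ Inv : (Fin c → Set G.V) → (Fin c → Set H.V) → Prop,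
    Inv g h ∧
    (∀ g' h', Inv g' h' → ¬ ColWin G H c g' h') ∧
    (∀ g' h', Inv g' h' → ∀ (t : Fin c) (S : Set G.V), ∃ T : Set H.V,
        Inv (Function.update g' t S) (Function.update h' t T)) ∧
    (∀ g' h', Inv g' h' → ∀ (t : Fin c) (T : Set H.V), ∃ S : Set G.V,
        Inv (Function.update g' t S) (Function.update h' t T))

/-- `∀` can force a win in the colouring game from the position `(g,h)`:
either the position is already a win for him, or he has a move such that
every response of `∃` leads to a position from which he can force a win. -/
inductive AllForcesWin (G H : BinStruct σ) (c : ℕ) :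
    (Fin c → Set G.V) → (Fin c → Set H.V) → Prop
  | now (g h) : ColWin G H c g h → AllForcesWin G H c g h
  | moveG (g h) (t : Fin c) (S : Set G.V) :
      (∀ T : Set H.V,
        AllForcesWin G H c (Function.update g t S) (Function.update h t T)) →
      AllForcesWin G H c g h
  | moveH (g h) (t : Fin c) (T : Set H.V) :
      (∀ S : Set G.V,
        AllForcesWin G H c (Function.update g t S) (Function.update h t T)) →
      AllForcesWin G H c g h

/-! ## Relation algebras, terms and formulas -/

/-- A relation algebra (Tarski's axioms): a Boolean algebra with an associative,
additive composition `;` with two-sided identity `1'`, and an additive involutive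
converse satisfying the Peircean/Tarski axioms. -/
class RelationAlgebra (A : Type) extends BooleanAlgebra A where
  comp : A → A → A
  conv : A → A
  one' : A
  comp_assoc : ∀ x y z : A, comp (comp x y) z = comp x (comp y z)
  comp_one' : ∀ x : A, comp x one' = x
  one'_comp : ∀ x : A, comp one' x = x
  sup_comp : ∀ x y z : A, comp (x ⊔ y) z = comp x z ⊔ comp y z
  comp_sup : ∀ x y z : A, comp x (y ⊔ z) = comp x y ⊔ comp x z
  conv_conv : ∀ x : A, conv (conv x) = x
  conv_sup : ∀ x y : A, conv (x ⊔ y) = conv x ⊔ conv y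
  conv_comp : ∀ x y : A, conv (comp x y) = comp (conv y) (conv x)
  tarski : ∀ x y : A, comp (conv x) (comp x y)ᶜ ⊓ y = ⊥

/-- A relation algebra is representable (a member of RRA) if it is isomorphic to a
subalgebra of an algebra of binary relations on some base set, with union,
complement, relational composition, converse and the identity relation. -/
def Representable (A : Type) [RelationAlgebra A] : Prop :=
  ∃ (X : Type) (θ : A → Set (X × X)),
    Function.Injective θ ∧
    (∀ a b : A, θ (a ⊔ b) = θ a ∪ θ b) ∧
    (∀ a : A, θ aᶜ = θ ⊤ \ θ a) ∧
    (∀ a b : A, θ (RelationAlgebra.comp a b) =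
        {p : X × X | ∃ z : X, (p.1, z) ∈ θ a ∧ (z, p.2) ∈ θ b}) ∧
    (∀ a : A, θ (RelationAlgebra.conv a) = {p : X × X | (p.2, p.1) ∈ θ a}) ∧
    θ RelationAlgebra.one' = {p : X × X | p.1 = p.2}

/-- A signature of relation-algebra operations on a carrier `A` (used to interpret
relation-algebra terms both in abstract relation algebras and in the concrete
rainbow complex algebras). -/
structure RAOps (A : Type) where
  bot : A
  top : A
  one' : A
  sup : A → A → A
  inf : A → A → A
  compl : A → A
  comp : A → A → A
  conv : A → A

/-- The operations of an abstract relation algebra. -/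
def RAOps.ofClass (A : Type) [RelationAlgebra A] : RAOps A :=
  ⟨⊥, ⊤, RelationAlgebra.one', (· ⊔ ·), (· ⊓ ·), (·ᶜ), RelationAlgebra.comp,
    RelationAlgebra.conv⟩

/-- The operations of the rainbow complex algebra `B_{G,H}`. -/
def rbOps (G H : BinStruct σ) : RAOps (Set (RbAtom G.V H.V)) :=
  ⟨∅, Set.univ, {RbAtom.id}, (· ∪ ·), (· ∩ ·), (·ᶜ), rbComp G H, rbConv⟩

/-- Terms in the language of relation algebras with variables `x_0, …, x_{c-1}`. -/
inductive RATerm (c : ℕ) : Type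
  | var (i : Fin c) : RATerm c
  | bot : RATerm c
  | top : RATerm c
  | one' : RATerm c
  | sup (s t : RATerm c) : RATerm c
  | inf (s t : RATerm c) : RATerm c
  | compl (t : RATerm c) : RATerm c
  | comp (s t : RATerm c) : RATerm c
  | conv (t : RATerm c) : RATerm c

namespace RATerm

variable {c : ℕ} {A : Type}

/-- Evaluation of a term under a total assignment of the variables. -/
def eval (ops : RAOps A) (v : Fin c → A) : RATerm c → A
  | var i => v i
  | bot => ops.bot
  | top => ops.top
  | one' => ops.one'
  | sup s t => ops.sup (s.eval ops v) (t.eval ops v)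
  | inf s t => ops.inf (s.eval ops v) (t.eval ops v)
  | compl t => ops.compl (t.eval ops v)
  | comp s t => ops.comp (s.eval ops v) (t.eval ops v)
  | conv t => ops.conv (t.eval ops v)

/-- Evaluation of a term under a partial assignment of the variables; defined
just when every variable of the term lies in the domain of the assignment. -/
def evalo (ops : RAOps A) (v : Fin c → Option A) : RATerm c → Option A
  | var i => v i
  | bot => some ops.bot
  | top => some ops.top
  | one' => some ops.one'
  | sup s t => (s.evalo ops v).bind fun a => (t.evalo ops v).map fun b => ops.sup a b
  | inf s t => (s.evalo ops v).bind fun a => (t.evalo ops v).map fun b => ops.inf a b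
  | compl t => (t.evalo ops v).map ops.compl
  | comp s t => (s.evalo ops v).bind fun a => (t.evalo ops v).map fun b => ops.comp a b
  | conv t => (t.evalo ops v).map ops.conv

/-- The variables occurring in a term. -/
def vars : RATerm c → Finset (Fin c)
  | var i => {i}
  | bot => ∅
  | top => ∅
  | one' => ∅
  | sup s t => s.vars ∪ t.vars
  | inf s t => s.vars ∪ t.vars
  | compl t => t.vars
  | comp s t => s.vars ∪ t.vars
  | conv t => t.vars

end RATerm

/-- First-order formulas in the language of relation algebras with variables
`x_0, …, x_{c-1}`. -/
inductive RAFormula (c : ℕ) : Type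
  | eq (s t : RATerm c) : RAFormula c
  | not (φ : RAFormula c) : RAFormula c
  | and (φ ψ : RAFormula c) : RAFormula c
  | ex (i : Fin c) (φ : RAFormula c) : RAFormula c

namespace RAFormula

variable {c : ℕ} {A : Type}

/-- Quantifier depth of a formula. -/
def qd : RAFormula c → ℕ
  | eq _ _ => 0
  | not φ => φ.qd
  | and φ ψ => max φ.qd ψ.qd
  | ex _ φ => φ.qd + 1

/-- Free variables of a formula. -/
def freeVars : RAFormula c → Finset (Fin c)
  | eq s t => s.vars ∪ t.vars
  | not φ => φ.freeVars
  | and φ ψ => φ.freeVars ∪ ψ.freeVars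
  | ex i φ => φ.freeVars \ {i}

/-- Satisfaction of a formula under a total assignment of the variables. -/
def Sat (ops : RAOps A) (v : Fin c → A) : RAFormula c → Prop
  | eq s t => s.eval ops v = t.eval ops v
  | not φ => ¬ Sat ops v φ
  | and φ ψ => Sat ops v φ ∧ Sat ops v ψ
  | ex i φ => ∃ a : A, Sat ops (Function.update v i a) φ

end RAFormula

/-! ## The pebble equivalence game on relation algebras -/

/-- The position `(α,β)` of the pebble game is good for `∃`: the two partial maps have
the same domain and the correspondence `t^α ↦ t^β` between the generated subalgebras
(given by evaluating terms whose variables lie in the common domain) is a well-defined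
isomorphism. -/
def GoodPos {A B : Type} (opsA : RAOps A) (opsB : RAOps B) (c : ℕ)
    (α : Fin c → Option A) (β : Fin c → Option B) : Prop :=
  (∀ i : Fin c, (α i).isSome ↔ (β i).isSome) ∧
  ∀ s t : RATerm c,
    (s.evalo opsA α = t.evalo opsA α ↔ s.evalo opsB β = t.evalo opsB β)

/-- `∃` has a winning strategy in the `c`-pebble, `n`-round equivalence game
`Γ^c_n(A, α, B, β)` (for finite `n`). -/
def ExWinsPebble {A B : Type} (opsA : RAOps A) (opsB : RAOps B) (c : ℕ) :
    ℕ → (Fin c → Option A) → (Fin c → Option B) → Prop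
  | 0, α, β => GoodPos opsA opsB c α β
  | n + 1, α, β => GoodPos opsA opsB c α β ∧
      (∀ (t : Fin c) (a : A), ∃ b : B,
        ExWinsPebble opsA opsB c n
          (Function.update α t (some a)) (Function.update β t (some b))) ∧
      (∀ (t : Fin c) (b : B), ∃ a : A,
        ExWinsPebble opsA opsB c n
          (Function.update α t (some a)) (Function.update β t (some b)))

/-- `∃` has a winning strategy in the infinitely long `c`-pebble equivalence game
`Γ^c_ω(A, α, B, β)`. -/
def ExWinsPebbleOmega {A B : Type} (opsA : RAOps A) (opsB : RAOps B) (c : ℕ)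
    (α : Fin c → Option A) (β : Fin c → Option B) : Prop :=
  ∃ Inv : (Fin c → Option A) → (Fin c → Option B) → Prop,
    Inv α β ∧
    (∀ α' β', Inv α' β' → GoodPos opsA opsB c α' β') ∧
    (∀ α' β', Inv α' β' → ∀ (t : Fin c) (a : A), ∃ b : B,
        Inv (Function.update α' t (some a)) (Function.update β' t (some b))) ∧
    (∀ α' β', Inv α' β' → ∀ (t : Fin c) (b : B), ∃ a : A,
        Inv (Function.update α' t (some a)) (Function.update β' t (some b)))

/-- `∃` has a winning strategy in the `c`-pebble, `n`-round equivalence game, where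
`n ≤ ω` (`n : ℕ∞`). -/
def ExWinsPebbleE {A B : Type} (opsA : RAOps A) (opsB : RAOps B) (c : ℕ)
    (n : ℕ∞) (α : Fin c → Option A) (β : Fin c → Option B) : Prop :=
  match n with
  | ⊤ => ExWinsPebbleOmega opsA opsB c α β
  | (m : ℕ) => ExWinsPebble opsA opsB c m α β

/-! ## The mirroring strategy -/

/-- The set of green subscripts of an element of a rainbow algebra. -/
def greenPart {V F : Type} (x : Set (RbAtom V F)) : Set V := {i | RbAtom.green i ∈ x}

/-- The element of the other rainbow algebra with the same non-green part as `x` and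
green part determined by `Y`. -/
def mirrorElt {V W F : Type} (x : Set (RbAtom V F)) (Y : Set W) : Set (RbAtom W F) :=
  fun a => match a with
  | RbAtom.green j => j ∈ Y
  | RbAtom.id => RbAtom.id ∈ x
  | RbAtom.black => RbAtom.black ∈ x
  | RbAtom.white => RbAtom.white ∈ x
  | RbAtom.yellow => RbAtom.yellow ∈ x
  | RbAtom.red j j' => RbAtom.red j j' ∈ x

/-- Inclusion of the first `c` colours into the `c+3` colours of the parallel game. -/
def liftCol {c : ℕ} (t : Fin c) : Fin (c + 3) := Fin.castLE (Nat.le_add_right c 3) t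

/-- A combined state of a play of the pebble game `Γ^c(B_{G,F}, B_{H,F})` together
with the parallel play of the colouring game `G^{c+3}_ω(G,H)`, recording also the
set of colours used so far. -/
structure MirrorState (c : ℕ) (G H F : BinStruct σ) : Type where
  α : Fin c → Option (Set (RbAtom G.V F.V))
  β : Fin c → Option (Set (RbAtom H.V F.V))
  g : Fin (c + 3) → Set G.V
  h : Fin (c + 3) → Set H.V
  used : Set (Fin (c + 3))

/-- The initial state: no pebbles placed, all vertices uncoloured, no colour used. -/
def mirrorInit (c : ℕ) (G H F : BinStruct σ) : MirrorState c G H F :=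
  ⟨fun _ => none, fun _ => none, fun _ => ∅, fun _ => ∅, ∅⟩

/-- `Inv` is a winning invariant witnessing a winning strategy for `∃` in the
colouring game `G^c_ω(G,H)` (from the initial position). -/
def IsColInvariant (G H : BinStruct σ) (c : ℕ)
    (Inv : (Fin c → Set G.V) → (Fin c → Set H.V) → Prop) : Prop :=
  Inv (fun _ => ∅) (fun _ => ∅) ∧
  (∀ g h, Inv g h → ¬ ColWin G H c g h) ∧
  (∀ g h, Inv g h → ∀ (t : Fin c) (S : Set G.V), ∃ T : Set H.V,
      Inv (Function.update g t S) (Function.update h t T)) ∧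
  (∀ g h, Inv g h → ∀ (t : Fin c) (T : Set H.V), ∃ S : Set G.V,
      Inv (Function.update g t S) (Function.update h t T))

/-- One round of the pebble game `Γ^c(B_{G,F}, B_{H,F})` in which `∃` plays the
mirroring strategy induced by the colouring-game winning strategy witnessed by the
invariant `Inv`: when `∀` plays pebble `t` on an element of one algebra, `∃` colours
the set of its green subscripts with colour `t` in the parallel colouring game,
obtains a response keeping the parallel play inside `Inv`, and answers with the
element with identical non-green part and green part determined by that response. -/
inductive MirrorStep (G H F : BinStruct σ) (c : ℕ)
    (Inv : (Fin (c + 3) → Set G.V) → (Fin (c + 3) → Set H.V) → Prop) :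
    MirrorState c G H F → MirrorState c G H F → Prop
  | fromG (s : MirrorState c G H F) (t : Fin c) (x : Set (RbAtom G.V F.V)) (Y : Set H.V) :
      Inv (Function.update s.g (liftCol t) (greenPart x))
          (Function.update s.h (liftCol t) Y) →
      MirrorStep G H F c Inv s
        ⟨Function.update s.α t (some x),
         Function.update s.β t (some (mirrorElt x Y)),
         Function.update s.g (liftCol t) (greenPart x),
         Function.update s.h (liftCol t) Y,
         insert (liftCol t) s.used⟩
  | fromH (s : MirrorState c G H F) (t : Fin c) (y : Set (RbAtom H.V F.V)) (X : Set G.V) :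
      Inv (Function.update s.g (liftCol t) X)
          (Function.update s.h (liftCol t) (greenPart y)) →
      MirrorStep G H F c Inv s
        ⟨Function.update s.α t (some (mirrorElt y X)),
         Function.update s.β t (some y),
         Function.update s.g (liftCol t) X,
         Function.update s.h (liftCol t) (greenPart y),
         insert (liftCol t) s.used⟩

/-- The states reachable in a play of the pebble game `Γ^c(B_{G,F}, B_{H,F})`
during which `∃` plays using the mirroring strategy. -/
def MirrorReachable (G H F : BinStruct σ) (c : ℕ)
    (Inv : (Fin (c + 3) → Set G.V) → (Fin (c + 3) → Set H.V) → Prop)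
    (s : MirrorState c G H F) : Prop :=
  Relation.ReflTransGen (MirrorStep G H F c Inv) (mirrorInit c G H F) s


/-! ## Atoms -/

section RbAtoms

open RbAtom

instance rbAtomFinite {α β : Type} [Finite α] [Finite β] : Finite (RbAtom α β) := by
  have : Function.Surjective (fun x : Fin 4 ⊕ (α ⊕ (β × β)) =>
      (match x with
        | .inl 0 => .id
        | .inl 1 => .black
        | .inl 2 => .white
        | .inl 3 => .yellow
        | .inr (.inl i) => .green i
        | .inr (.inr (j, j')) => .red j j' : RbAtom α β)) := by
    intro a
    cases a with
    | id => exact ⟨.inl 0, rfl⟩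
    | black => exact ⟨.inl 1, rfl⟩
    | white => exact ⟨.inl 2, rfl⟩
    | yellow => exact ⟨.inl 3, rfl⟩
    | green i => exact ⟨.inr (.inl i), rfl⟩
    | red j j' => exact ⟨.inr (.inr (j, j')), rfl⟩
  exact Finite.of_surjective _ this

theorem rbConv_conv {α β : Type} (a : RbAtom α β) : a.conv.conv = a := by
  cases a <;> rfl

theorem PartialHom2.swap {G H : BinStruct σ} {i i' : G.V} {j j' : H.V}
    (h : PartialHom2 G H i i' j j') : PartialHom2 G H i' i j' j :=
  fun b => ⟨(h b).2, (h b).1⟩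

theorem PartialHom2_comm {G H : BinStruct σ} {i i' : G.V} {j j' : H.V} :
    PartialHom2 G H i' i j' j ↔ PartialHom2 G H i i' j j' :=
  ⟨PartialHom2.swap, PartialHom2.swap⟩

/-- Base forbidden triples, by pattern matching. -/
def BFM (G H : BinStruct σ) :
    RbAtom G.V H.V → RbAtom G.V H.V → RbAtom G.V H.V → Prop
  | .id, b, c => b ≠ c
  | .green _, .green _, .green _ => True
  | .green _, .green _, .white => True
  | .yellow, .yellow, .yellow => True
  | .yellow, .yellow, .black => True
  | .red a b, .red c d, .red e f => ¬(a = e ∧ b = c ∧ d = f)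
  | .green i, .green i', .red j j' => ¬(i ≠ i' ∧ PartialHom2 G H i i' j j')
  | _, _, _ => False

theorem BF_iff (G H : BinStruct σ) (a b c : RbAtom G.V H.V) :
    BaseForbidden G H a b c ↔ BFM G H a b c := by
  constructor
  · intro h
    cases h <;> simp only [BFM] <;> assumption
  · intro h
    cases a with
    | id => exact .ident _ _ h
    | black => simp [BFM] at h
    | white => simp [BFM] at h
    | yellow =>
      cases b <;> cases c <;> simp only [BFM] at h <;> constructor
    | green i =>
      cases b <;> cases c <;> simp only [BFM] at h <;> constructor <;> assumption
    | red j j' =>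
      cases b <;> cases c <;> simp only [BFM] at h <;> constructor <;> assumption

/-- Allowed triples, by pattern matching. -/
def OkM (G H : BinStruct σ) :
    RbAtom G.V H.V → RbAtom G.V H.V → RbAtom G.V H.V → Prop
  | .id, b, c => b = c
  | a, .id, c => a = c
  | a, b, .id => a = b.conv
  | .green _, .green _, .green _ => False
  | .green _, .green _, .white => False
  | .green _, .white, .green _ => False
  | .white, .green _, .green _ => False
  | .yellow, .yellow, .yellow => False
  | .yellow, .yellow, .black => False
  | .yellow, .black, .yellow => False
  | .black, .yellow, .yellow => False
  | .red a b, .red c d, .red e f => a = e ∧ b = c ∧ d = f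
  | .green i, .green i', .red j j' => i ≠ i' ∧ PartialHom2 G H i i' j j'
  | .green i, .red j j', .green i' => i ≠ i' ∧ PartialHom2 G H i i' j j'
  | .red j j', .green i, .green i' => i ≠ i' ∧ PartialHom2 G H i' i j j'
  | _, _, _ => True

theorem Forbidden_iff_BFM (G H : BinStruct σ) (a b c : RbAtom G.V H.V) :
    Forbidden G H a b c ↔ (BFM G H a b c ∨ BFM G H a.conv c b ∨ BFM G H c b.conv a ∨
      BFM G H b.conv a.conv c.conv ∨ BFM G H c.conv a b.conv ∨ BFM G H b c.conv a.conv) := by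
  simp only [Forbidden, BF_iff, Prod.mk.injEq]
  constructor
  · rintro ⟨x, y, z, h, h' | h' | h' | h' | h' | h'⟩ <;> obtain ⟨rfl, rfl, rfl⟩ := h' <;>
      (try simp only [rbConv_conv]) <;> tauto
  · rintro (h | h | h | h | h | h)
    · exact ⟨_, _, _, h, .inl ⟨rfl, rfl, rfl⟩⟩
    · exact ⟨_, _, _, h, .inr (.inl ⟨(rbConv_conv _).symm, rfl, rfl⟩)⟩
    · exact ⟨_, _, _, h, .inr (.inr (.inl ⟨rfl, (rbConv_conv _).symm, rfl⟩))⟩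
    · exact ⟨_, _, _, h, .inr (.inr (.inr (.inl ⟨(rbConv_conv _).symm, (rbConv_conv _).symm,
        (rbConv_conv _).symm⟩)))⟩
    · exact ⟨_, _, _, h, .inr (.inr (.inr (.inr (.inl ⟨rfl, (rbConv_conv _).symm,
        (rbConv_conv _).symm⟩))))⟩
    · exact ⟨_, _, _, h, .inr (.inr (.inr (.inr (.inr ⟨(rbConv_conv _).symm, rfl,
        (rbConv_conv _).symm⟩))))⟩

theorem not_Forbidden_iff (G H : BinStruct σ) (a b c : RbAtom G.V H.V) :
    ¬ Forbidden G H a b c ↔ OkM G H a b c := by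
  rw [Forbidden_iff_BFM]
  cases a <;> cases b <;> cases c <;> simp [BFM, OkM, RbAtom.conv] <;>
    grind [PartialHom2_comm]

theorem OkM_cycle (G H : BinStruct σ) {a b c : RbAtom G.V H.V} (h : OkM G H a b c) :
    OkM G H a.conv c b := by
  cases a <;> cases b <;> cases c <;> simp_all [OkM, RbAtom.conv] <;>
    grind [PartialHom2_comm]

theorem OkM_conv (G H : BinStruct σ) {a b c : RbAtom G.V H.V} (h : OkM G H a b c) :
    OkM G H b.conv a.conv c.conv := by
  cases a <;> cases b <;> cases c <;> simp_all [OkM, RbAtom.conv] <;>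
    grind [PartialHom2_comm]

end RbAtoms

/-! ## The rainbow relation algebra -/

section RbAlgebra

open RbAtom

theorem mem_rbComp (G H : BinStruct σ) (X Y : Set (RbAtom G.V H.V)) (c : RbAtom G.V H.V) :
    c ∈ rbComp G H X Y ↔ ∃ a ∈ X, ∃ b ∈ Y, OkM G H a b c := by
  simp only [rbComp, Set.mem_ofPred_eq, not_Forbidden_iff]

theorem OkM_black (G H : BinStruct σ) {b c : RbAtom G.V H.V} (hb : b ≠ .id) (hc : c ≠ .id)
    (h : ¬ (b = .yellow ∧ c = .yellow)) : OkM G H b c .black := by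
  cases b <;> cases c <;> simp_all [OkM]

theorem OkM_white (G H : BinStruct σ) {b c : RbAtom G.V H.V} (hb : b ≠ .id) (hc : c ≠ .id)
    (h : ¬ ((∃ i, b = .green i) ∧ ∃ i, c = .green i)) : OkM G H b c .white := by
  cases b <;> cases c <;> simp_all [OkM]

theorem OkM_yyr (G H : BinStruct σ) (j j' : H.V) :
    OkM G H .yellow .yellow (.red j j') := by
  simp [OkM]

theorem conv_ne_id {α β : Type} {a : RbAtom α β} : a.conv ≠ .id ↔ a ≠ .id := by
  cases a <;> simp [RbAtom.conv]

theorem conv_eq_yellow {α β : Type} {a : RbAtom α β} : a.conv = .yellow ↔ a = .yellow := by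
  cases a <;> simp [RbAtom.conv]

theorem conv_eq_green {α β : Type} {a : RbAtom α β} {i : α} :
    a.conv = .green i ↔ a = .green i := by
  cases a <;> simp [RbAtom.conv]

/-- Every pair of distinct points of `G` can be mapped to `H` by a partial homomorphism. -/
def PairHom (G H : BinStruct σ) : Prop :=
  ∀ i i' : G.V, i ≠ i' → ∃ j j' : H.V, PartialHom2 G H i i' j j'

theorem OkM_id_right (G H : BinStruct σ) (a : RbAtom G.V H.V) : OkM G H a .id a := by
  cases a <;> simp [OkM]

theorem OkM_id_left (G H : BinStruct σ) (a : RbAtom G.V H.V) : OkM G H .id a a := by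
  simp [OkM]

theorem OkM_id_left_iff (G H : BinStruct σ) (a b : RbAtom G.V H.V) :
    OkM G H .id a b ↔ a = b := by
  simp [OkM]

theorem OkM_id_right_iff (G H : BinStruct σ) (a b : RbAtom G.V H.V) :
    OkM G H a .id b ↔ a = b := by
  cases a <;> simp [OkM]

theorem OkM_to_id_iff (G H : BinStruct σ) (a b : RbAtom G.V H.V) :
    OkM G H a b .id ↔ a = b.conv := by
  cases a <;> cases b <;> simp [OkM, RbAtom.conv]

/-- Amalgamation of two triangles along an edge. -/
theorem OkM_assoc (G H : BinStruct σ) (hp : PairHom G H) {a b c d e : RbAtom G.V H.V}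
    (h1 : OkM G H a b e) (h2 : OkM G H e c d) : ∃ f, OkM G H b c f ∧ OkM G H a f d := by
  by_cases ha : a = .id
  · subst ha
    rw [OkM_id_left_iff] at h1
    subst h1
    exact ⟨d, h2, OkM_id_left ..⟩
  by_cases hb : b = .id
  · subst hb
    rw [OkM_id_right_iff] at h1
    subst h1
    exact ⟨c, OkM_id_left .., h2⟩
  by_cases hc : c = .id
  · subst hc
    rw [OkM_id_right_iff] at h2
    subst h2
    exact ⟨b, OkM_id_right .., h1⟩
  by_cases hd : d = .id
  · subst hd
    rw [OkM_to_id_iff] at h2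
    subst h2
    refine ⟨a.conv, ?_, ?_⟩
    · have := OkM_conv G H (OkM_cycle G H (OkM_conv G H (OkM_cycle G H h1)))
      simpa only [rbConv_conv] using this
    · rw [OkM_to_id_iff, rbConv_conv]
  have ha' : a.conv ≠ .id := conv_ne_id.2 ha
  have key : ∀ f, OkM G H b c f → OkM G H a.conv d f → ∃ f, OkM G H b c f ∧ OkM G H a f d := by
    intro f hf hf'
    refine ⟨f, hf, ?_⟩
    have := OkM_cycle G H hf'
    rwa [rbConv_conv] at this
  by_cases hw : ((∃ i, b = .green i) ∧ ∃ i, c = .green i) ∨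
      ((∃ i, a.conv = .green i) ∧ ∃ i, d = .green i)
  · by_cases hk : (b = .yellow ∧ c = .yellow) ∨ (a.conv = .yellow ∧ d = .yellow)
    · -- red or the identity
      rcases hw with ⟨⟨i, rfl⟩, i', rfl⟩ | ⟨⟨i, hi⟩, i', rfl⟩
      · rcases hk with ⟨h, -⟩ | ⟨h, h'⟩
        · exact absurd h (by simp)
        · subst h'
          by_cases hii : i = i'
          · subst hii
            exact key .id (by rw [OkM_to_id_iff]; rfl) (by rw [OkM_to_id_iff, h]; rfl)
          · obtain ⟨j, j', hjj⟩ := hp i i' hii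
            refine key (.red j j') ⟨hii, hjj⟩ ?_
            rw [h]; exact OkM_yyr ..
      · rcases hk with ⟨rfl, rfl⟩ | ⟨h, h'⟩
        · by_cases hii : i = i'
          · subst hii
            exact key .id (by rw [OkM_to_id_iff]; rfl) (by rw [OkM_to_id_iff, hi]; rfl)
          · obtain ⟨j, j', hjj⟩ := hp i i' hii
            refine key (.red j j') (OkM_yyr ..) ?_
            rw [hi]; exact ⟨hii, hjj⟩
        · exact absurd h' (by simp)
    · exact key .black (OkM_black G H hb hc (by tauto)) (OkM_black G H ha' hd (by tauto))
  · exact key .white (OkM_white G H hb hc (by tauto)) (OkM_white G H ha' hd (by tauto))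

theorem OkM_assoc' (G H : BinStruct σ) (hp : PairHom G H) {a b c d f : RbAtom G.V H.V}
    (h1 : OkM G H b c f) (h2 : OkM G H a f d) : ∃ e, OkM G H a b e ∧ OkM G H e c d := by
  obtain ⟨e, he1, he2⟩ := OkM_assoc G H hp (OkM_conv G H h1) (OkM_conv G H h2)
  refine ⟨e.conv, ?_, ?_⟩
  · have := OkM_conv G H he1
    simpa only [rbConv_conv] using this
  · have := OkM_conv G H he2
    simpa only [rbConv_conv] using this

/-- The rainbow algebra as a relation algebra. -/
@[reducible]
def rbRA (G H : BinStruct σ) (hp : PairHom G H) : RelationAlgebra (Set (RbAtom G.V H.V)) :=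
  { (inferInstance : BooleanAlgebra (Set (RbAtom G.V H.V))) with
    comp := rbComp G H
    conv := rbConv
    one' := {RbAtom.id}
    comp_assoc := by
      intro x y z
      ext d
      simp only [mem_rbComp]
      constructor
      · rintro ⟨e, ⟨a, ha, b, hb, h1⟩, c, hc, h2⟩
        obtain ⟨f, hf1, hf2⟩ := OkM_assoc G H hp h1 h2
        exact ⟨a, ha, f, ⟨b, hb, c, hc, hf1⟩, hf2⟩
      · rintro ⟨a, ha, f, ⟨b, hb, c, hc, h1⟩, h2⟩
        obtain ⟨e, he1, he2⟩ := OkM_assoc' G H hp h1 h2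
        exact ⟨e, ⟨a, ha, b, hb, he1⟩, c, hc, he2⟩
    comp_one' := by
      intro x
      ext c
      simp only [mem_rbComp, Set.mem_singleton_iff, exists_eq_left, OkM_id_right_iff]
      simp
    one'_comp := by
      intro x
      ext c
      simp only [mem_rbComp, Set.mem_singleton_iff, exists_eq_left, OkM_id_left_iff]
      simp
    sup_comp := by
      intro x y z
      ext c
      change c ∈ rbComp G H (x ∪ y) z ↔ c ∈ rbComp G H x z ∪ rbComp G H y z
      simp only [mem_rbComp, Set.mem_union]
      grind
    comp_sup := by
      intro x y z
      ext c
      change c ∈ rbComp G H x (y ∪ z) ↔ c ∈ rbComp G H x y ∪ rbComp G H x z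
      simp only [mem_rbComp, Set.mem_union]
      grind
    conv_conv := by
      intro x
      ext c
      simp only [rbConv, Set.mem_ofPred_eq, rbConv_conv]
    conv_sup := by
      intro x y
      rfl
    conv_comp := by
      intro x y
      ext c
      change c.conv ∈ rbComp G H x y ↔ c ∈ rbComp G H (rbConv y) (rbConv x)
      simp only [mem_rbComp]
      constructor
      · rintro ⟨a, ha, b, hb, h⟩
        have := OkM_conv G H h
        rw [rbConv_conv] at this
        exact ⟨b.conv, by simpa [rbConv, rbConv_conv] using hb, a.conv,
          by simpa [rbConv, rbConv_conv] using ha, this⟩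
      · rintro ⟨a, ha, b, hb, h⟩
        exact ⟨b.conv, hb, a.conv, ha, OkM_conv G H h⟩
    tarski := by
      intro x y
      change rbComp G H (rbConv x) (rbComp G H x y)ᶜ ∩ y = ∅
      rw [Set.eq_empty_iff_forall_notMem]
      rintro c ⟨hc, hcy⟩
      rw [mem_rbComp] at hc
      obtain ⟨a, ha, b, hb, h⟩ := hc
      exact hb ((mem_rbComp ..).2 ⟨a.conv, ha, c, hcy, OkM_cycle G H h⟩) }

theorem rbRA_ops (G H : BinStruct σ) (hp : PairHom G H) :
    @RAOps.ofClass _ (rbRA G H hp) = rbOps G H := rfl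

end RbAlgebra

/-! ## Non-representability -/

section RbNonRep

open RbAtom

theorem rb_labels (G H : BinStruct σ) (hp : PairHom G H) [Finite G.V] [Finite H.V]
    (h : @Representable _ (rbRA G H hp)) :
    ∃ (X : Type) (lab : X → X → RbAtom G.V H.V → Prop),
      (∀ p q a b, lab p q a → lab p q b → a = b) ∧
      (∀ a, ∃ p q, lab p q a) ∧
      (∀ p q a b c, lab p q c → OkM G H a b c → ∃ z, lab p z a ∧ lab z q b) ∧
      (∀ p z q a b, lab p z a → lab z q b → ∃ c, lab p q c ∧ OkM G H a b c) ∧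
      (∀ p q a, lab p q a → lab q p a.conv) := by
  obtain ⟨X, θ, hinj, hsup, hcompl, hcomp, hconv, -⟩ := h
  change ∀ A B, θ (A ∪ B) = _ at hsup
  change ∀ A, θ (Aᶜ) = θ Set.univ \ θ A at hcompl
  change ∀ A B, θ (rbComp G H A B) = _ at hcomp
  change ∀ A, θ (rbConv A) = _ at hconv
  have hempty : θ ∅ = ∅ := by
    have := hcompl Set.univ
    rwa [Set.compl_univ, Set.sdiff_self] at this
  have hmono : ∀ A B, A ⊆ B → θ A ⊆ θ B := by
    intro A B hAB
    rw [← Set.union_eq_self_of_subset_left hAB, hsup]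
    exact Set.subset_union_left
  have hmem : ∀ (p : X × X) (A : Set (RbAtom G.V H.V)), p ∈ θ A ↔ ∃ a ∈ A, p ∈ θ {a} := by
    intro p A
    have hA : A.Finite := Set.toFinite A
    induction A, hA using Set.Finite.induction_on with
    | empty => simp [hempty]
    | insert _ _ ih =>
      have ih' : _ ↔ _ := ih
      rw [Set.insert_eq, hsup, Set.mem_union, ih']
      simp
  refine ⟨X, fun p q a => (p, q) ∈ θ {a}, ?_, ?_, ?_, ?_, ?_⟩
  · intro p q a b ha hb
    by_contra hne
    have h1 : ({b} : Set (RbAtom G.V H.V)) ⊆ {a}ᶜ := by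
      intro x hx
      simp only [Set.mem_singleton_iff] at hx
      subst hx
      simp only [Set.mem_compl_iff, Set.mem_singleton_iff]
      exact fun h => hne h.symm
    have h2 := hmono _ _ h1 hb
    rw [hcompl] at h2
    exact h2.2 ha
  · intro a
    by_contra hne
    push Not at hne
    have : θ {a} = θ ∅ := by
      rw [hempty, Set.eq_empty_iff_forall_notMem]
      rintro ⟨p, q⟩
      exact hne p q
    have := hinj this
    simp at this
  · intro p q a b c hc hok
    have h1 : ({c} : Set (RbAtom G.V H.V)) ⊆ rbComp G H {a} {b} := by
      intro x hx
      simp only [Set.mem_singleton_iff] at hx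
      subst hx
      rw [mem_rbComp]
      exact ⟨a, rfl, b, rfl, hok⟩
    have h2 := hmono _ _ h1 hc
    rw [hcomp] at h2
    exact h2
  · intro p z q a b ha hb
    have h2 : (p, q) ∈ θ (rbComp G H {a} {b}) := by
      rw [hcomp]
      exact ⟨z, ha, hb⟩
    rw [hmem] at h2
    obtain ⟨c, hc, hc'⟩ := h2
    rw [mem_rbComp] at hc
    obtain ⟨a', rfl, b', rfl, hok⟩ := hc
    exact ⟨c, hc', hok⟩
  · intro p q a ha
    have h1 : (rbConv {a} : Set (RbAtom G.V H.V)) ⊆ {a.conv} := by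
      intro x hx
      change x.conv = a at hx
      change x = a.conv
      rw [← hx, rbConv_conv]
    apply hmono _ _ h1
    rw [hconv]
    exact ha

theorem OkM_ggyy (G H : BinStruct σ) {k l : G.V} (hkl : k ≠ l) {a : RbAtom G.V H.V}
    (h1 : OkM G H (.green k) (.green l) a) (h2 : OkM G H .yellow .yellow a) :
    ∃ j j', a = .red j j' ∧ PartialHom2 G H k l j j' := by
  cases a with
  | red j j' => exact ⟨j, j', rfl, h1.2⟩
  | id =>
    rw [OkM_to_id_iff] at h1
    simp [RbAtom.conv, hkl] at h1
  | _ => simp [OkM] at h1 h2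

theorem OkM_gy_any (G H : BinStruct σ) {i : G.V} {e : RbAtom G.V H.V}
    (h : OkM G H (.green i) .yellow e) (k : G.V) : OkM G H (.green k) .yellow e := by
  cases e <;> simp [OkM, RbAtom.conv] at h ⊢

theorem rb_not_rep (G H : BinStruct σ) (hp : PairHom G H) [Finite G.V] [Finite H.V]
    (h3 : ∃ (i i' : G.V) (j j' : H.V), i ≠ i' ∧ PartialHom2 G H i i' j j' ∧
        ¬ ∃ f : G.V → H.V, IsHom G H f ∧ f i = j ∧ f i' = j') :
    ¬ @Representable _ (rbRA G H hp) := by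
  intro hrep
  obtain ⟨X, lab, huniq, hne, hwit, htri, hcv⟩ := rb_labels G H hp hrep
  obtain ⟨i, i', j, j', hii, hph, hno⟩ := h3
  have htri' : ∀ p z q a b c, lab p z a → lab z q b → lab p q c → OkM G H a b c := by
    intro p z q a b c h1 h2 h3
    obtain ⟨d, hd, hok⟩ := htri p z q a b h1 h2
    rwa [huniq p q c d h3 hd]
  obtain ⟨n, n', hn⟩ := hne (.red j j')
  obtain ⟨x, hnx, hxn⟩ := hwit n n' (.green i) (.green i') _ hn ⟨hii, hph⟩
  obtain ⟨y, hny, hyn⟩ := hwit n n' .yellow .yellow _ hn (OkM_yyr ..)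
  have hxn0 : lab x n (.green i) := hcv _ _ _ hnx
  have hny' : lab n' y .yellow := hcv _ _ _ hyn
  obtain ⟨e, hxy, hoke⟩ := htri x n y _ _ hxn0 hny
  have hz : ∀ k, ∃ z, lab x z (.green k) ∧ lab z y .yellow := by
    intro k
    apply hwit x y _ _ e hxy
    exact OkM_gy_any G H hoke k
  have hz' : ∃ z : G.V → X, (∀ k, lab x (z k) (.green k) ∧ lab (z k) y .yellow) ∧
      z i = n ∧ z i' = n' := by
    classical
    choose z hz using hz
    refine ⟨fun k => if k = i then n else if k = i' then n' else z k, ?_, by simp, ?_⟩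
    · intro k
      dsimp only
      split_ifs with h h'
      · subst h; exact ⟨hxn0, hny⟩
      · subst h'; exact ⟨hxn, hny'⟩
      · exact hz k
    · simp [Ne.symm hii]
  obtain ⟨z, hz, hzi, hzi'⟩ := hz'
  have hred : ∀ k l, k ≠ l → ∃ j j', lab (z k) (z l) (.red j j') ∧
      PartialHom2 G H k l j j' := by
    intro k l hkl
    have h1 : lab (z k) x (.green k) := hcv _ _ _ (hz k).1
    obtain ⟨a, ha, ha'⟩ := htri _ _ _ _ _ h1 (hz l).1
    have h2 : lab y (z l) .yellow := hcv _ _ _ (hz l).2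
    have h3 := htri' _ _ _ _ _ _ (hz k).2 h2 ha
    obtain ⟨j, j', rfl, h⟩ := OkM_ggyy G H hkl ha' h3
    exact ⟨j, j', ha, h⟩
  have hnn : lab (z i) (z i') (.red j j') := by rw [hzi, hzi']; exact hn
  -- first index is constantly `j` on edges from `z i`
  have hfirst : ∀ k, ∃ m, (k = i → m = j) ∧ (k = i' → m = j') ∧
      (k ≠ i → lab (z i) (z k) (.red j m)) := by
    intro k
    by_cases hki : k = i
    · exact ⟨j, fun _ => rfl, fun h => absurd (hki.symm.trans h) hii, fun h => absurd hki h⟩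
    by_cases hki' : k = i'
    · subst hki'
      exact ⟨j', fun h => absurd h hki, fun _ => rfl, fun _ => hnn⟩
    obtain ⟨m, m', hm, -⟩ := hred i k (Ne.symm hki)
    obtain ⟨l, l', hl, -⟩ := hred i' k (Ne.symm hki')
    obtain ⟨h1, h2, h3⟩ := htri' _ _ _ _ _ _ hnn hl hm
    subst h1
    exact ⟨m', fun h => absurd h hki, fun h => absurd h hki', fun _ => hm⟩
  choose f hfi hfi' hf using hfirst
  have hlab : ∀ k l, k ≠ l → lab (z k) (z l) (.red (f k) (f l)) := by
    intro k l hkl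
    by_cases hki : k = i
    · rw [hfi k hki, hki]
      exact hf l (fun h => hkl (hki.trans h.symm))
    by_cases hli : l = i
    · rw [hfi l hli, hli]
      exact hcv _ _ _ (hf k hki)
    obtain ⟨m, m', hm, -⟩ := hred k l hkl
    obtain ⟨h1, h2, h3⟩ := htri' _ _ _ _ _ _ (hf k hki) hm (hf l hli)
    rw [h2, ← h3]
    exact hm
  refine hno ⟨f, ?_, hfi i rfl, hfi' i' rfl⟩
  intro b u v huv hr
  obtain ⟨m, m', hm, hpm⟩ := hred u v huv
  have := huniq _ _ _ _ (hlab u v huv) hm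
  simp only [RbAtom.red.injEq] at this
  rw [this.1, this.2]
  exact (hpm b).1 hr

end RbNonRep

/-! ## Elementary equivalence -/

section RbGame

open RbAtom

variable {G H : BinStruct σ}

/-- A two-pebble back-and-forth system between `G` and `H`. -/
structure BF2 (E : G.V → G.V → H.V → H.V → Prop) : Prop where
  swap : ∀ i i' k k', E i i' k k' → E i' i k' k
  forth : ∀ i i' k k', E i i' k k' → ∀ l, ∃ m, E i l k m
  back : ∀ i i' k k', E i i' k k' → ∀ m, ∃ l, E i l k m
  forth0 : ∀ i, ∃ i' k k', E i i' k k'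
  back0 : ∀ k, ∃ k' i i', E i i' k k'
  eq : ∀ i i' k k', E i i' k k' → (i = i' ↔ k = k')
  rel : ∀ i i' k k', E i i' k k' → ∀ b, (G.rel b i i' ↔ H.rel b k k')

/-- The induced relation between atoms. -/
def AtomRel {F : Type} (E : G.V → G.V → H.V → H.V → Prop) :
    RbAtom G.V F → RbAtom H.V F → Prop
  | .id, .id => True
  | .black, .black => True
  | .white, .white => True
  | .yellow, .yellow => True
  | .red j j', .red l l' => j = l ∧ j' = l'
  | .green i, .green k => ∃ i' k', E i i' k k'
  | _, _ => False

theorem BF2.symm {E : G.V → G.V → H.V → H.V → Prop} (hE : BF2 E) :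
    BF2 (G := H) (H := G) (fun k k' i i' => E i i' k k') where
  swap _ _ _ _ h := hE.swap _ _ _ _ h
  forth _ _ _ _ h := hE.back _ _ _ _ h
  back _ _ _ _ h := hE.forth _ _ _ _ h
  forth0 k := hE.back0 k
  back0 i := hE.forth0 i
  eq _ _ _ _ h := (hE.eq _ _ _ _ h).symm
  rel _ _ _ _ h b := (hE.rel _ _ _ _ h b).symm

theorem AtomRel.symm {F : Type} {E : G.V → G.V → H.V → H.V → Prop}
    {a : RbAtom G.V F} {a' : RbAtom H.V F} (h : AtomRel E a a') :
    AtomRel (G := H) (H := G) (fun k k' i i' => E i i' k k') a' a := by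
  cases a <;> cases a' <;> simp_all [AtomRel]
  obtain ⟨i', k', h⟩ := h
  exact ⟨_, _, h⟩

theorem AtomRel.total {F : Type} {E : G.V → G.V → H.V → H.V → Prop} (hE : BF2 E)
    (a : RbAtom G.V F) : ∃ a' : RbAtom H.V F, AtomRel E a a' := by
  cases a with
  | id => exact ⟨.id, trivial⟩
  | black => exact ⟨.black, trivial⟩
  | white => exact ⟨.white, trivial⟩
  | yellow => exact ⟨.yellow, trivial⟩
  | red j j' => exact ⟨.red j j', rfl, rfl⟩
  | green i =>
    obtain ⟨i', k, k', h⟩ := hE.forth0 i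
    exact ⟨.green k, i', k', h⟩

theorem AtomRel.conv {F : Type} {E : G.V → G.V → H.V → H.V → Prop}
    {a : RbAtom G.V F} {a' : RbAtom H.V F} (h : AtomRel E a a') :
    AtomRel E a.conv a'.conv := by
  cases a <;> cases a' <;> simp_all [AtomRel, RbAtom.conv]

theorem BF2.ph {F : BinStruct σ} {E : G.V → G.V → H.V → H.V → Prop} (hE : BF2 E)
    {i i' : G.V} {k k' : H.V} (h : E i i' k k') (j j' : F.V) :
    PartialHom2 G F i i' j j' ↔ PartialHom2 H F k k' j j' := by
  have h1 := hE.rel _ _ _ _ h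
  have h2 := hE.rel _ _ _ _ (hE.swap _ _ _ _ h)
  simp only [PartialHom2, h1, h2]

/-- A strengthened atom correspondence for pairs of atoms. -/
def AtomRel2 {F : Type} (E : G.V → G.V → H.V → H.V → Prop) :
    RbAtom G.V F → RbAtom G.V F → RbAtom H.V F → RbAtom H.V F → Prop
  | .green i, .green i', .green k, .green k' => E i i' k k'
  | a, b, a', b' => AtomRel E a a' ∧ AtomRel E b b'

theorem AtomRel2.fst {F : Type} {E : G.V → G.V → H.V → H.V → Prop}
    {a b : RbAtom G.V F} {a' b' : RbAtom H.V F} (h : AtomRel2 E a b a' b') :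
    AtomRel E a a' := by
  cases a <;> cases b <;> cases a' <;> cases b' <;> simp_all [AtomRel2, AtomRel]
  exact ⟨_, _, h⟩

theorem AtomRel2.snd {F : Type} {E : G.V → G.V → H.V → H.V → Prop} (hE : BF2 E)
    {a b : RbAtom G.V F} {a' b' : RbAtom H.V F} (h : AtomRel2 E a b a' b') :
    AtomRel E b b' := by
  cases a <;> cases b <;> cases a' <;> cases b' <;> simp_all [AtomRel2, AtomRel]
  exact ⟨_, _, hE.swap _ _ _ _ h⟩

theorem AtomRel2.exists {F : Type} {E : G.V → G.V → H.V → H.V → Prop} (hE : BF2 E)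
    {a : RbAtom G.V F} {a' : RbAtom H.V F} (h : AtomRel E a a') (b : RbAtom G.V F) :
    ∃ b', AtomRel2 E a b a' b' := by
  by_cases hg : (∃ i, a = .green i) ∧ ∃ i, b = .green i
  · obtain ⟨⟨i, rfl⟩, i', rfl⟩ := hg
    cases a' with
    | green k =>
      obtain ⟨l, m, hlm⟩ := h
      obtain ⟨k', hk⟩ := hE.forth _ _ _ _ hlm i'
      exact ⟨.green k', hk⟩
    | _ => simp [AtomRel] at h
  · obtain ⟨b', hb⟩ := AtomRel.total hE b
    refine ⟨b', ?_⟩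
    cases a <;> cases b <;> simp_all [AtomRel2]

theorem AtomRel.inv {F : Type} {E : G.V → G.V → H.V → H.V → Prop}
    {a : RbAtom G.V F} {a' : RbAtom H.V F} (h : AtomRel E a a') :
    (a = .id ∧ a' = .id) ∨ (a = .black ∧ a' = .black) ∨ (a = .white ∧ a' = .white) ∨
    (a = .yellow ∧ a' = .yellow) ∨ (∃ i k, a = .green i ∧ a' = .green k) ∨
    (∃ j j', a = .red j j' ∧ a' = .red j j') := by
  cases a <;> cases a' <;> simp_all [AtomRel]

set_option maxHeartbeats 2000000 in
/-- Transfer of allowed triangles. -/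
theorem OkM_transfer {F : BinStruct σ} {E : G.V → G.V → H.V → H.V → Prop} (hE : BF2 E)
    {a b c : RbAtom G.V F.V} {a' b' c' : RbAtom H.V F.V}
    (hok : OkM G F a b c)
    (hab : AtomRel2 E a b a' b') (hac : AtomRel2 E a c a' c') (hbc : AtomRel2 E b c b' c') :
    OkM H F a' b' c' := by
  have e1 := hE.eq
  have e2 := fun {i i' k k'} (h : E i i' k k') => hE.ph (F := F) h
  have e3 := hE.swap
  rcases hab.fst.inv with ⟨rfl, rfl⟩ | ⟨rfl, rfl⟩ | ⟨rfl, rfl⟩ | ⟨rfl, rfl⟩ |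
    ⟨i, k, rfl, rfl⟩ | ⟨j1, j2, rfl, rfl⟩ <;>
  rcases (hab.snd hE).inv with ⟨rfl, rfl⟩ | ⟨rfl, rfl⟩ | ⟨rfl, rfl⟩ | ⟨rfl, rfl⟩ |
    ⟨i', k', rfl, rfl⟩ | ⟨j3, j4, rfl, rfl⟩ <;>
  rcases (hac.snd hE).inv with ⟨rfl, rfl⟩ | ⟨rfl, rfl⟩ | ⟨rfl, rfl⟩ | ⟨rfl, rfl⟩ |
    ⟨i'', k'', rfl, rfl⟩ | ⟨j5, j6, rfl, rfl⟩ <;>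
  simp only [OkM, RbAtom.conv, reduceCtorEq] at hok ⊢ <;>
  simp only [AtomRel2] at hab hac hbc <;> first | assumption | grind

theorem AtomRel2.of {F : Type} {E : G.V → G.V → H.V → H.V → Prop}
    {a b : RbAtom G.V F} {a' b' : RbAtom H.V F} (ha : AtomRel E a a') (hb : AtomRel E b b')
    (h : ¬ ((∃ i, a = .green i) ∧ ∃ i, b = .green i)) : AtomRel2 E a b a' b' := by
  cases a <;> cases b <;> simp_all [AtomRel2]

theorem AtomRel2.swap {F : Type} {E : G.V → G.V → H.V → H.V → Prop} (hE : BF2 E)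
    {a b : RbAtom G.V F} {a' b' : RbAtom H.V F} (h : AtomRel2 E a b a' b') :
    AtomRel2 E b a b' a' := by
  by_cases hg : (∃ i, b = .green i) ∧ ∃ i, a = .green i
  · obtain ⟨⟨i, rfl⟩, i', rfl⟩ := hg
    cases a' <;> cases b' <;> simp only [AtomRel2, AtomRel, and_false, false_and] at h
    exact hE.swap _ _ _ _ h
  · exact .of (h.snd hE) h.fst hg

theorem OkM_back {F : BinStruct σ} {E : G.V → G.V → H.V → H.V → Prop} (hE : BF2 E)
    {a b c : RbAtom G.V F.V} {c' : RbAtom H.V F.V}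
    (hok : OkM G F a b c) (hc : AtomRel E c c') :
    ∃ a' b', AtomRel E a a' ∧ AtomRel E b b' ∧ OkM H F a' b' c' := by
  obtain ⟨a', hca⟩ := AtomRel2.exists hE hc a
  have ha := hca.snd hE
  by_cases hag : ∃ i, a = .green i
  · obtain ⟨b', hab⟩ := AtomRel2.exists hE ha b
    refine ⟨a', b', ha, hab.snd hE, OkM_transfer hE hok hab (hca.swap hE) ?_⟩
    refine .of (hab.snd hE) hc ?_
    rintro ⟨⟨i', rfl⟩, i'', rfl⟩
    obtain ⟨i, rfl⟩ := hag
    exact hok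
  · obtain ⟨b', hcb⟩ := AtomRel2.exists hE hc b
    have hb := hcb.snd hE
    exact ⟨a', b', ha, hb, OkM_transfer hE hok (.of ha hb fun h => hag h.1)
      (.of ha hc fun h => hag h.1) (hcb.swap hE)⟩

/-- Related elements of the two algebras. -/
def EltRel {F : Type} (E : G.V → G.V → H.V → H.V → Prop) (x : Set (RbAtom G.V F))
    (y : Set (RbAtom H.V F)) : Prop :=
  ∀ a a', AtomRel E a a' → (a ∈ x ↔ a' ∈ y)

theorem EltRel.comp {F : BinStruct σ} {E : G.V → G.V → H.V → H.V → Prop} (hE : BF2 E)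
    {x x' : Set (RbAtom G.V F.V)} {y y' : Set (RbAtom H.V F.V)}
    (h : EltRel E x y) (h' : EltRel E x' y') :
    EltRel E (rbComp G F x x') (rbComp H F y y') := by
  intro c c' hc
  simp only [mem_rbComp]
  constructor
  · rintro ⟨a, ha, b, hb, hok⟩
    obtain ⟨a', b', haa, hbb, hok'⟩ := OkM_back hE hok hc
    exact ⟨a', (h _ _ haa).1 ha, b', (h' _ _ hbb).1 hb, hok'⟩
  · rintro ⟨a, ha, b, hb, hok⟩
    obtain ⟨a', b', haa, hbb, hok'⟩ := OkM_back hE.symm hok hc.symm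
    exact ⟨a', (h _ _ haa.symm).2 ha, b', (h' _ _ hbb.symm).2 hb, hok'⟩

theorem EltRel.eval {F : BinStruct σ} {E : G.V → G.V → H.V → H.V → Prop} (hE : BF2 E) {c : ℕ}
    {v : Fin c → Set (RbAtom G.V F.V)} {w : Fin c → Set (RbAtom H.V F.V)}
    (h : ∀ t, EltRel E (v t) (w t)) (s : RATerm c) :
    EltRel E (s.eval (rbOps G F) v) (s.eval (rbOps H F) w) := by
  induction s with
  | var i => exact h i
  | bot => exact fun a a' _ => Iff.rfl
  | top => exact fun a a' _ => Iff.rfl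
  | one' =>
    intro a a' haa
    change a = .id ↔ a' = .id
    cases a <;> cases a' <;> simp_all [AtomRel]
  | sup s t hs ht => exact fun a a' haa => or_congr (hs _ _ haa) (ht _ _ haa)
  | inf s t hs ht => exact fun a a' haa => and_congr (hs _ _ haa) (ht _ _ haa)
  | compl s hs => exact fun a a' haa => not_congr (hs _ _ haa)
  | comp s t hs ht => exact EltRel.comp hE hs ht
  | conv s hs => exact fun a a' haa => hs _ _ haa.conv

theorem EltRel.eq_iff {F : Type} {E : G.V → G.V → H.V → H.V → Prop} (hE : BF2 E)
    {x x' : Set (RbAtom G.V F)} {y y' : Set (RbAtom H.V F)}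
    (h : EltRel E x y) (h' : EltRel E x' y') : x = x' ↔ y = y' := by
  constructor
  · rintro rfl
    ext a
    obtain ⟨a', ha⟩ := AtomRel.total hE.symm a
    rw [← h _ _ ha.symm, ← h' _ _ ha.symm]
  · rintro rfl
    ext a
    obtain ⟨a', ha⟩ := AtomRel.total hE a
    rw [h _ _ ha, h' _ _ ha]

end RbGame

section RbColour

open RbAtom

/-- A winning invariant for the colouring game, in a symmetric form. -/
structure GoodInv (G H : BinStruct σ) (n : ℕ)
    (Inv : (Fin n → Set G.V) → (Fin n → Set H.V) → Prop) : Prop where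
  pal : ∀ g h, Inv g h → ∀ π, (∃ x, x ∈ PaletteSet g π) ↔ (∃ y, y ∈ PaletteSet h π)
  rel : ∀ g h, Inv g h → ∀ π π' b,
    (∃ x ∈ PaletteSet g π, ∃ x' ∈ PaletteSet g π', G.rel b x x') ↔
    (∃ y ∈ PaletteSet h π, ∃ y' ∈ PaletteSet h π', H.rel b y y')
  fwd : ∀ g h, Inv g h → ∀ (t : Fin n) (S : Set G.V), ∃ T : Set H.V,
        Inv (Function.update g t S) (Function.update h t T)
  bwd : ∀ g h, Inv g h → ∀ (t : Fin n) (T : Set H.V), ∃ S : Set G.V,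
        Inv (Function.update g t S) (Function.update h t T)

variable {G H : BinStruct σ} {n : ℕ} {Inv : (Fin n → Set G.V) → (Fin n → Set H.V) → Prop}

theorem GoodInv.symm (hI : GoodInv G H n Inv) : GoodInv H G n (fun h g => Inv g h) where
  pal _ _ h π := (hI.pal _ _ h π).symm
  rel _ _ h π π' b := (hI.rel _ _ h π π' b).symm
  fwd _ _ h := hI.bwd _ _ h
  bwd _ _ h := hI.fwd _ _ h

theorem exists_goodInv (h1 : ExSurvives G H n (fun _ => ∅) (fun _ => ∅)) :
    ∃ Inv, GoodInv G H n Inv ∧ Inv (fun _ => ∅) (fun _ => ∅) := by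
  obtain ⟨Inv, h0, hw, hf, hb⟩ := h1
  refine ⟨Inv, ⟨?_, ?_, hf, hb⟩, h0⟩
  · intro g h hgh π
    have h1 := hw g h hgh
    simp only [ColWin, not_or, not_exists] at h1
    have h2 := h1.1 π
    rw [← Set.Nonempty, ← Set.Nonempty, Set.nonempty_iff_ne_empty, Set.nonempty_iff_ne_empty]
    by_contra h3
    apply h2
    unfold Xor'
    tauto
  · intro g h hgh π π' b
    have h1 := hw g h hgh
    simp only [ColWin, not_or, not_exists] at h1
    have h2 := h1.2 π π' b
    have e1 : (∃ x ∈ PaletteSet g π, ∃ x' ∈ PaletteSet g π', G.rel b x x') ↔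
        ¬ ((PaletteSet g π ×ˢ PaletteSet g π') ∩ {q | G.rel b q.1 q.2} = ∅) := by
      rw [← ne_eq, ← Set.nonempty_iff_ne_empty]
      constructor
      · rintro ⟨x, hx, x', hx', hr⟩
        exact ⟨(x, x'), ⟨hx, hx'⟩, hr⟩
      · rintro ⟨⟨x, x'⟩, ⟨hx, hx'⟩, hr⟩
        exact ⟨x, hx, x', hx', hr⟩
    have e2 : (∃ x ∈ PaletteSet h π, ∃ x' ∈ PaletteSet h π', H.rel b x x') ↔
        ¬ ((PaletteSet h π ×ˢ PaletteSet h π') ∩ {q | H.rel b q.1 q.2} = ∅) := by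
      rw [← ne_eq, ← Set.nonempty_iff_ne_empty]
      constructor
      · rintro ⟨x, hx, x', hx', hr⟩
        exact ⟨(x, x'), ⟨hx, hx'⟩, hr⟩
      · rintro ⟨⟨x, x'⟩, ⟨hx, hx'⟩, hr⟩
        exact ⟨x, hx, x', hx', hr⟩
    rw [e1, e2]
    by_contra h3
    apply h2
    unfold Xor'
    tauto

theorem GoodInv.same (hI : GoodInv G H n Inv) {g : Fin n → Set G.V} {h : Fin n → Set H.V}
    (hgh : Inv g h) (i : G.V) : ∃ k, ∀ s, i ∈ g s ↔ k ∈ h s := by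
  obtain ⟨k, hk⟩ := (hI.pal g h hgh {s | i ∈ g s}).1 ⟨i, fun s => Iff.rfl⟩
  exact ⟨k, fun s => (hk s).symm⟩

theorem GoodInv.same_sing (hI : GoodInv G H n Inv) {g : Fin n → Set G.V} {h : Fin n → Set H.V}
    (hgh : Inv g h) {p : Fin n} {i : G.V} {k : H.V} (hi : g p = {i}) (hk : h p = {k}) (s : Fin n) :
    i ∈ g s ↔ k ∈ h s := by
  obtain ⟨k', hk'⟩ := hI.same hgh i
  have : k' ∈ h p := (hk' p).1 (by rw [hi]; rfl)
  rw [hk] at this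
  have : k' = k := this
  rw [← this]
  exact hk' s

theorem GoodInv.sing (hI : GoodInv G H n Inv) {g : Fin n → Set G.V} {h : Fin n → Set H.V}
    (hgh : Inv g h) {p r : Fin n} (hpr : p ≠ r) {i : G.V} (hi : g p = {i}) :
    ∃ k, h p = {k} := by
  obtain ⟨k, hk⟩ := hI.same hgh i
  refine ⟨k, ?_⟩
  have hkp : k ∈ h p := (hk p).1 (by rw [hi]; rfl)
  ext k1
  constructor
  · intro hk1
    by_contra hne
    obtain ⟨S, hS⟩ := hI.bwd g h hgh r {k}
    have aux : ∀ k0, k0 ∈ h p → (i ∈ S ↔ k0 = k) := by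
      intro k0 hk0
      obtain ⟨x, hx⟩ := hI.symm.same hS k0
      have hxp := (hx p).1 (by simpa [Function.update_of_ne hpr] using hk0)
      rw [Function.update_of_ne hpr, hi] at hxp
      have hxp : x = i := hxp
      have := hx r
      rw [Function.update_self, Function.update_self, hxp] at this
      exact this.symm
    exact hne ((aux k1 hk1).1 ((aux k hkp).2 rfl))
  · rintro rfl
    exact hkp

theorem GoodInv.rel_sing (hI : GoodInv G H n Inv) {g : Fin n → Set G.V} {h : Fin n → Set H.V}
    (hgh : Inv g h) {p q : Fin n} {i i' : G.V} {k k' : H.V} (hi : g p = {i}) (hk : h p = {k})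
    (hi' : g q = {i'}) (hk' : h q = {k'}) (b : σ) (hr : G.rel b i i') : H.rel b k k' := by
  obtain ⟨y, hy, y', hy', hr'⟩ := (hI.rel g h hgh {s | i ∈ g s} {s | i' ∈ g s} b).1
    ⟨i, fun s => Iff.rfl, i', fun s => Iff.rfl, hr⟩
  have e1 : y ∈ h p := (hy p).2 (by rw [Set.mem_ofPred_eq, hi]; rfl)
  have e2 : y' ∈ h q := (hy' q).2 (by rw [Set.mem_ofPred_eq, hi']; rfl)
  rw [hk] at e1
  rw [hk'] at e2
  rw [← show y = k from e1, ← show y' = k' from e2]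
  exact hr'

/-- The back-and-forth system obtained from a winning invariant and interpretations of the
first `c` colours. -/
def colE {c : ℕ} (Inv : (Fin (c + 3) → Set G.V) → (Fin (c + 3) → Set H.V) → Prop)
    (X : Fin c → Set G.V) (Y : Fin c → Set H.V) (i i' : G.V) (k k' : H.V) : Prop :=
  ∃ p q : Fin (c + 3), p ≠ q ∧ p ≠ Fin.last _ ∧ q ≠ Fin.last _ ∧
    (∀ t : Fin c, liftCol t ≠ p) ∧ (∀ t : Fin c, liftCol t ≠ q) ∧
    ∃ g h, Inv g h ∧ (∀ t, g (liftCol t) = X t) ∧ (∀ t, h (liftCol t) = Y t) ∧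
      g p = {i} ∧ g q = {i'} ∧ h p = {k} ∧ h q = {k'}

theorem colE_forth {c : ℕ} {Inv : (Fin (c + 3) → Set G.V) → (Fin (c + 3) → Set H.V) → Prop}
    (hI : GoodInv G H (c + 3) Inv) {X : Fin c → Set G.V} {Y : Fin c → Set H.V}
    {i i' : G.V} {k k' : H.V} (h : colE Inv X Y i i' k k') (l : G.V) :
    ∃ m, colE Inv X Y i l k m := by
  obtain ⟨p, q, hpq, hp, hq, hp', hq', g, h, hgh, hX, hY, hi, hi', hk, hk'⟩ := h
  obtain ⟨T, hT⟩ := hI.fwd g h hgh q {l}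
  obtain ⟨m, hm⟩ := hI.sing hT hq (Function.update_self ..)
  refine ⟨m, p, q, hpq, hp, hq, hp', hq', _, _, hT, ?_, ?_, ?_, ?_, ?_, hm⟩
  · intro t; rw [Function.update_of_ne (hq' t), hX]
  · intro t; rw [Function.update_of_ne (hq' t), hY]
  · rw [Function.update_of_ne hpq, hi]
  · rw [Function.update_self]
  · rw [Function.update_of_ne hpq, hk]

theorem colE_forth0 {c : ℕ} {Inv : (Fin (c + 3) → Set G.V) → (Fin (c + 3) → Set H.V) → Prop}
    (hI : GoodInv G H (c + 3) Inv) {X : Fin c → Set G.V} {Y : Fin c → Set H.V}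
    {g h} (hgh : Inv g h) (hX : ∀ t, g (liftCol t) = X t) (hY : ∀ t, h (liftCol t) = Y t)
    (i : G.V) : ∃ i' k k', colE Inv X Y i i' k k' := by
  let p : Fin (c + 3) := ⟨c, by omega⟩
  let q : Fin (c + 3) := ⟨c + 1, by omega⟩
  have hpq : p ≠ q := by simp [p, q]
  have hp : p ≠ Fin.last _ := by simp [p, Fin.ext_iff]
  have hq : q ≠ Fin.last _ := by simp [q, Fin.ext_iff]
  have hp' : ∀ t : Fin c, liftCol t ≠ p := by
    intro t; have := t.2; simp [liftCol, p, Fin.ext_iff]; omega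
  have hq' : ∀ t : Fin c, liftCol t ≠ q := by
    intro t; have := t.2; simp [liftCol, q, Fin.ext_iff]; omega
  obtain ⟨T, hT⟩ := hI.fwd g h hgh p {i}
  obtain ⟨T', hT'⟩ := hI.fwd _ _ hT q {i}
  have hi : (Function.update (Function.update g p {i}) q {i}) p = {i} := by
    rw [Function.update_of_ne hpq, Function.update_self]
  have hi' : (Function.update (Function.update g p {i}) q {i}) q = {i} := by
    rw [Function.update_self]
  obtain ⟨k, hk⟩ := hI.sing hT' hp hi
  obtain ⟨k', hk'⟩ := hI.sing hT' hq hi'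
  refine ⟨i, k, k', p, q, hpq, hp, hq, hp', hq', _, _, hT', ?_, ?_, hi, hi', hk, hk'⟩
  · intro t
    rw [Function.update_of_ne (hq' t), Function.update_of_ne (hp' t), hX]
  · intro t
    rw [Function.update_of_ne (hq' t), Function.update_of_ne (hp' t), hY]

theorem colE_symm {c : ℕ} {Inv : (Fin (c + 3) → Set G.V) → (Fin (c + 3) → Set H.V) → Prop}
    {X : Fin c → Set G.V} {Y : Fin c → Set H.V} {i i' : G.V} {k k' : H.V} :
    colE Inv X Y i i' k k' ↔ colE (fun h g => Inv g h) Y X k k' i i' := by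
  constructor
  · rintro ⟨p, q, hpq, hp, hq, hp', hq', g, h, hgh, hX, hY, hi, hi', hk, hk'⟩
    exact ⟨p, q, hpq, hp, hq, hp', hq', h, g, hgh, hY, hX, hk, hk', hi, hi'⟩
  · rintro ⟨p, q, hpq, hp, hq, hp', hq', g, h, hgh, hX, hY, hi, hi', hk, hk'⟩
    exact ⟨p, q, hpq, hp, hq, hp', hq', h, g, hgh, hY, hX, hk, hk', hi, hi'⟩

theorem colE_BF2 {c : ℕ} {Inv : (Fin (c + 3) → Set G.V) → (Fin (c + 3) → Set H.V) → Prop}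
    (hI : GoodInv G H (c + 3) Inv) {X : Fin c → Set G.V} {Y : Fin c → Set H.V}
    {g h} (hgh : Inv g h) (hX : ∀ t, g (liftCol t) = X t) (hY : ∀ t, h (liftCol t) = Y t) :
    BF2 (colE Inv X Y) where
  swap := by
    rintro i i' k k' ⟨p, q, hpq, hp, hq, hp', hq', g, h, hgh, hX, hY, hi, hi', hk, hk'⟩
    exact ⟨q, p, hpq.symm, hq, hp, hq', hp', g, h, hgh, hX, hY, hi', hi, hk', hk⟩
  forth _ _ _ _ hE l := colE_forth hI hE l
  back _ _ _ _ hE m := by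
    obtain ⟨l, hl⟩ := colE_forth hI.symm (colE_symm.1 hE) m
    exact ⟨l, colE_symm.2 hl⟩
  forth0 i := colE_forth0 hI hgh hX hY i
  back0 k := by
    obtain ⟨k', i, i', hE⟩ := colE_forth0 hI.symm hgh hY hX k
    exact ⟨k', i, i', colE_symm.2 hE⟩
  eq := by
    rintro i i' k k' ⟨p, q, hpq, hp, hq, hp', hq', g, h, hgh, hX, hY, hi, hi', hk, hk'⟩
    have := hI.same_sing hgh hi hk q
    rw [hi', hk'] at this
    exact this
  rel := by
    rintro i i' k k' ⟨p, q, hpq, hp, hq, hp', hq', g, h, hgh, hX, hY, hi, hi', hk, hk'⟩ b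
    exact ⟨hI.rel_sing hgh hi hk hi' hk' b, hI.symm.rel_sing hgh hk hi hk' hi' b⟩

theorem GoodInv.pairHom {c : ℕ}
    {Inv : (Fin (c + 3) → Set G.V) → (Fin (c + 3) → Set H.V) → Prop}
    (hI : GoodInv G H (c + 3) Inv) {g h} (hgh : Inv g h) : PairHom G H := by
  intro i i' _
  have hE := colE_BF2 hI hgh (fun _ => rfl) (fun _ => rfl)
  obtain ⟨_, k, _, h0⟩ := hE.forth0 i
  obtain ⟨k', hk⟩ := hE.forth _ _ _ _ h0 i'
  exact ⟨k, k', fun b => ⟨(hE.rel _ _ _ _ hk b).1,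
    (hE.rel _ _ _ _ (hE.swap _ _ _ _ hk) b).1⟩⟩

/-- Positions of the pebble game that match a safe position of the colouring game. -/
def MatchPos {F : BinStruct σ} {c : ℕ}
    (Inv : (Fin (c + 3) → Set G.V) → (Fin (c + 3) → Set H.V) → Prop)
    (v : Fin c → Set (RbAtom G.V F.V)) (w : Fin c → Set (RbAtom H.V F.V)) : Prop :=
  ∃ g h, Inv g h ∧ (∀ t, g (liftCol t) = greenPart (v t)) ∧
    (∀ t, h (liftCol t) = greenPart (w t)) ∧
    ∀ t, EltRel (fun _ _ _ _ => False) (v t) (w t)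

theorem liftCol_inj {c : ℕ} {s t : Fin c} : liftCol s = liftCol t ↔ s = t := by
  simp [liftCol, Fin.ext_iff]

theorem MatchPos.forth {F : BinStruct σ} {c : ℕ}
    {Inv : (Fin (c + 3) → Set G.V) → (Fin (c + 3) → Set H.V) → Prop}
    (hI : GoodInv G H (c + 3) Inv)
    {v : Fin c → Set (RbAtom G.V F.V)} {w : Fin c → Set (RbAtom H.V F.V)}
    (hm : MatchPos Inv v w) (t : Fin c) (x : Set (RbAtom G.V F.V)) :
    ∃ y, MatchPos Inv (Function.update v t x) (Function.update w t y) := by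
  obtain ⟨g, h, hgh, hv, hw, hng⟩ := hm
  obtain ⟨T, hT⟩ := hI.fwd g h hgh (liftCol t) (greenPart x)
  refine ⟨mirrorElt x T, _, _, hT, ?_, ?_, ?_⟩
  · intro s
    by_cases hs : s = t
    · subst hs; simp
    · rw [Function.update_of_ne hs, Function.update_of_ne (by rwa [ne_eq, liftCol_inj]), hv]
  · intro s
    by_cases hs : s = t
    · subst hs; rw [Function.update_self, Function.update_self]; rfl
    · rw [Function.update_of_ne hs, Function.update_of_ne (by rwa [ne_eq, liftCol_inj]), hw]
  · intro s
    by_cases hs : s = t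
    · subst hs
      rw [Function.update_self, Function.update_self]
      intro a a' haa
      rcases haa.inv with ⟨rfl, rfl⟩ | ⟨rfl, rfl⟩ | ⟨rfl, rfl⟩ | ⟨rfl, rfl⟩ |
        ⟨i, k, rfl, rfl⟩ | ⟨j1, j2, rfl, rfl⟩
      · exact Iff.rfl
      · exact Iff.rfl
      · exact Iff.rfl
      · exact Iff.rfl
      · simp [AtomRel] at haa
      · exact Iff.rfl
    · rw [Function.update_of_ne hs, Function.update_of_ne hs]
      exact hng s

theorem EltRel_false_symm {F : Type} {x : Set (RbAtom G.V F)} {y : Set (RbAtom H.V F)}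
    (h : EltRel (fun _ _ _ _ => False) x y) :
    EltRel (G := H) (H := G) (fun _ _ _ _ => False) y x :=
  fun _ _ haa => (h _ _ haa.symm).symm

theorem MatchPos.symm {F : BinStruct σ} {c : ℕ}
    {Inv : (Fin (c + 3) → Set G.V) → (Fin (c + 3) → Set H.V) → Prop}
    {v : Fin c → Set (RbAtom G.V F.V)} {w : Fin c → Set (RbAtom H.V F.V)}
    (hm : MatchPos Inv v w) : MatchPos (fun h g => Inv g h) w v := by
  obtain ⟨g, h, hgh, hv, hw, hng⟩ := hm
  exact ⟨h, g, hgh, hw, hv, fun t => EltRel_false_symm (hng t)⟩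

theorem MatchPos.sat {F : BinStruct σ} {c : ℕ}
    {Inv : (Fin (c + 3) → Set G.V) → (Fin (c + 3) → Set H.V) → Prop}
    (hI : GoodInv G H (c + 3) Inv) (φ : RAFormula c)
    {v : Fin c → Set (RbAtom G.V F.V)} {w : Fin c → Set (RbAtom H.V F.V)}
    (hm : MatchPos Inv v w) : φ.Sat (rbOps G F) v ↔ φ.Sat (rbOps H F) w := by
  induction φ generalizing v w with
  | eq s t =>
    obtain ⟨g, h, hgh, hv, hw, hng⟩ := hm
    have hE := colE_BF2 hI hgh hv hw
    have hvar : ∀ t, EltRel (colE Inv (fun t => greenPart (v t)) (fun t => greenPart (w t)))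
        (v t) (w t) := by
      intro t a a' haa
      by_cases hg : ∃ i k, a = .green i ∧ a' = .green k
      · obtain ⟨i, k, rfl, rfl⟩ := hg
        obtain ⟨i', k', p, q, hpq, hp, hq, hp', hq', g, h, hgh, hX, hY, hi, hi', hk, hk'⟩ := haa
        have := hI.same_sing hgh hi hk (liftCol t)
        rw [hX, hY] at this
        exact this
      · apply hng t
        cases a <;> cases a' <;> simp_all [AtomRel]
    exact EltRel.eq_iff hE (EltRel.eval hE hvar s) (EltRel.eval hE hvar t)
  | not φ ih => exact not_congr (ih hm)
  | and φ ψ ih1 ih2 => exact and_congr (ih1 hm) (ih2 hm)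
  | ex i φ ih =>
    constructor
    · rintro ⟨a, ha⟩
      obtain ⟨b, hb⟩ := hm.forth hI i a
      exact ⟨b, (ih hb).1 ha⟩
    · rintro ⟨b, hb⟩
      obtain ⟨a, ha⟩ := hm.symm.forth hI.symm i b
      exact ⟨a, (ih ha.symm).2 hb⟩

theorem rb_equiv {F : BinStruct σ} {c : ℕ}
    {Inv : (Fin (c + 3) → Set G.V) → (Fin (c + 3) → Set H.V) → Prop}
    (hI : GoodInv G H (c + 3) Inv) (h0 : Inv (fun _ => ∅) (fun _ => ∅)) (φ : RAFormula c) :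
    φ.Sat (rbOps G F) (fun _ => ∅) ↔ φ.Sat (rbOps H F) (fun _ => ∅) :=
  MatchPos.sat hI φ ⟨_, _, h0, fun _ => rfl, fun _ => rfl, fun _ _ _ _ => Iff.rfl⟩

end RbColour

/-! ## Representability of `B_{H,H}` -/

section RbRep

open RbAtom

variable {H : BinStruct σ}

/-- `f` is a homomorphism that governs the red clique of the cone over `(x, y)`. -/
def ConeHom (H : BinStruct σ) (k : ℕ) (L : ℕ → ℕ → RbAtom H.V H.V) (x y : ℕ)
    (f : H.V → H.V) : Prop :=
  IsHom H H f ∧ ∀ n < k, ∀ n' < k, n ≠ n' → ∀ i i', L x n = .green i → L y n = .yellow →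
    L x n' = .green i' → L y n' = .yellow → L n n' = .red (f i) (f i')

/-- Atomic networks with nodes `0, …, k-1` satisfying the rainbow invariant. -/
structure RbNet (H : BinStruct σ) (k : ℕ) (L : ℕ → ℕ → RbAtom H.V H.V) : Prop where
  ident : ∀ x < k, ∀ y < k, (L x y = .id ↔ x = y)
  conv : ∀ x < k, ∀ y < k, L y x = (L x y).conv
  tri : ∀ x < k, ∀ y < k, ∀ z < k, OkM H H (L x y) (L y z) (L x z)
  cone : ∀ x < k, ∀ y < k, ∃ f, ConeHom H k L x y f

theorem OkM_wb (G H : BinStruct σ) {a l b : RbAtom G.V H.V}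
    (ha : a = .white ∨ a = .black ∨ ∃ j j', a = .red j j')
    (hb : b = .white ∨ b = .black ∨ ∃ j j', b = .red j j')
    (h : ¬ ((∃ j j', a = .red j j') ∧ ∃ j j', b = .red j j')) (hl : l ≠ .id) :
    OkM G H a l b := by
  rcases ha with rfl | rfl | ⟨j, j', rfl⟩ <;> rcases hb with rfl | rfl | ⟨m, m', rfl⟩ <;>
    cases l <;> simp_all [OkM]

/-- The data of a one-point extension of a network. -/
structure RbExt (H : BinStruct σ) (k : ℕ) (L : ℕ → ℕ → RbAtom H.V H.V) (x y : ℕ)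
    (a b : RbAtom H.V H.V) (M : ℕ → RbAtom H.V H.V) : Prop where
  left : M x = a.conv
  right : M y = b
  ne_id : ∀ n < k, M n ≠ .id
  tri : ∀ n < k, ∀ n' < k, OkM H H (M n) (L n n') (M n')
  not_green : ∀ n < k, n ≠ x → n ≠ y → ∀ i, M n ≠ .green i
  not_yellow : ∀ n < k, n ≠ x → n ≠ y → M n ≠ .yellow
  cone : ∀ u < k, ∀ v < k, ∀ i, M u = .green i → M v = .yellow →
    ∃ f, ConeHom H k L u v f ∧ ∀ n < k, ∀ i', L u n = .green i' → L v n = .yellow →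
      M n = .red (f i) (f i')

theorem RbNet.exists_ext_aux {k : ℕ} {L : ℕ → ℕ → RbAtom H.V H.V} (hN : RbNet H k L)
    {x y : ℕ} (hx : x < k) (hy : y < k) {a b : RbAtom H.V H.V}
    (hok : OkM H H a b (L x y)) (hno : ∀ z < k, ¬ (L x z = a ∧ L z y = b))
    (hnc : ¬ (a = .yellow ∧ ∃ i, b = .green i)) : ∃ M, RbExt H k L x y a b M := by
  obtain ⟨f, hf, hcone⟩ := hN.cone x hx y hy
  have hxx : L x x = .id := (hN.ident x hx x hx).2 rfl
  have hyy : L y y = .id := (hN.ident y hy y hy).2 rfl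
  have ha : a ≠ .id := by
    rintro rfl
    rw [OkM_id_left_iff] at hok
    exact hno x hx ⟨hxx, hok.symm⟩
  have hb : b ≠ .id := by
    rintro rfl
    rw [OkM_id_right_iff] at hok
    exact hno y hy ⟨hok.symm, hyy⟩
  have hex : ∀ n, ∃ m : RbAtom H.V H.V, (n = x → m = a.conv) ∧ (n = y → m = b) ∧
      (n ≠ x → n ≠ y →
        (m = .white ∧ ¬ ((∃ i, a = .green i) ∧ ∃ i, L x n = .green i) ∧
          ¬ ((∃ i, b = .green i) ∧ ∃ i, L y n = .green i)) ∨
        (m = .black ∧ ¬ (a = .yellow ∧ L x n = .yellow) ∧ ¬ (b = .yellow ∧ L y n = .yellow)) ∨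
        (∃ i i', a = .green i ∧ b = .yellow ∧ L x n = .green i' ∧ L y n = .yellow ∧
          m = .red (f i) (f i'))) := by
    intro n
    by_cases hnx : n = x
    · refine ⟨a.conv, fun _ => rfl, ?_, fun h => absurd hnx h⟩
      intro hny
      have : L x y = .id := by rw [← hnx, ← hny]; rw [← hny] at hyy; exact hyy
      rw [this, OkM_to_id_iff] at hok
      rw [hok, rbConv_conv]
    by_cases hny : n = y
    · exact ⟨b, fun h => absurd h hnx, fun _ => rfl, fun _ h => absurd hny h⟩
    by_cases hw : ((∃ i, a = .green i) ∧ ∃ i, L x n = .green i) ∨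
          ((∃ i, b = .green i) ∧ ∃ i, L y n = .green i)
    · by_cases hk : (a = .yellow ∧ L x n = .yellow) ∨ (b = .yellow ∧ L y n = .yellow)
      · rcases hw with ⟨⟨i, hi⟩, i', hi'⟩ | ⟨⟨i, hi⟩, i', hi'⟩
        · rcases hk with ⟨h, -⟩ | ⟨h, h'⟩
          · rw [hi] at h; exact absurd h (by simp)
          · exact ⟨.red (f i) (f i'), fun h => absurd h hnx, fun h => absurd h hny,
              fun _ _ => .inr (.inr ⟨i, i', hi, h, hi', h', rfl⟩)⟩
        · rcases hk with ⟨h, -⟩ | ⟨h, h'⟩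
          · exact absurd ⟨h, i, hi⟩ hnc
          · rw [hi] at h; exact absurd h (by simp)
      · exact ⟨.black, fun h => absurd h hnx, fun h => absurd h hny,
          fun _ _ => .inr (.inl ⟨rfl, by tauto, by tauto⟩)⟩
    · exact ⟨.white, fun h => absurd h hnx, fun h => absurd h hny,
          fun _ _ => .inl ⟨rfl, by tauto, by tauto⟩⟩
  choose M hMx hMy hM using hex
  have hMx := hMx x rfl
  have hMy := hMy y rfl
  have hcolour : ∀ n, n ≠ x → n ≠ y → M n = .white ∨ M n = .black ∨ ∃ j j', M n = .red j j' := by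
    intro n h1 h2
    rcases hM n h1 h2 with h | h | ⟨i, i', -, -, -, -, h⟩
    · exact .inl h.1
    · exact .inr (.inl h.1)
    · exact .inr (.inr ⟨_, _, h⟩)
  have hneid : ∀ n, M n ≠ .id := by
    intro n
    by_cases hnx : n = x
    · rw [hnx, hMx]; exact conv_ne_id.2 ha
    by_cases hny : n = y
    · rw [hny, hMy]; exact hb
    rcases hcolour n hnx hny with h | h | ⟨_, _, h⟩ <;> rw [h] <;> simp
  have hred : ∀ n, n ≠ x → n ≠ y → (∃ j j', M n = .red j j') →
      ∃ i i', a = .green i ∧ b = .yellow ∧ L x n = .green i' ∧ L y n = .yellow ∧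
          M n = .red (f i) (f i') := by
    rintro n h1 h2 ⟨j, j', h⟩
    rcases hM n h1 h2 with h' | h' | h'
    · rw [h] at h'; exact absurd h'.1 (by simp)
    · rw [h] at h'; exact absurd h'.1 (by simp)
    · exact h'
  -- triangles through `x` and another node
  have htx : ∀ n < k, n ≠ x → n ≠ y → OkM H H (M x) (L x n) (M n) := by
    intro n hn h1 h2
    have hl : L x n ≠ .id := fun h => h1 ((hN.ident x hx n hn).1 h).symm
    have ha' : a.conv ≠ .id := conv_ne_id.2 ha
    rw [hMx]
    rcases hM n h1 h2 with ⟨h, h', -⟩ | ⟨h, h', -⟩ | ⟨i, i', hi, hb', hi', hy', h⟩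
    · rw [h]
      refine OkM_white H H ha' hl ?_
      simpa only [conv_eq_green] using h'
    · rw [h]
      refine OkM_black H H ha' hl ?_
      simpa only [conv_eq_yellow] using h'
    · rw [h, hi', hi]
      have hii : i ≠ i' := by
        rintro rfl
        refine hno n hn ⟨by rw [hi', hi], ?_⟩
        rw [hN.conv y hy n hn, hy', hb']; rfl
      exact ⟨hii, fun b => ⟨hf b i i' hii, hf b i' i hii.symm⟩⟩
  have hty : ∀ n < k, n ≠ x → n ≠ y → OkM H H (M y) (L y n) (M n) := by
    intro n hn h1 h2
    have hl : L y n ≠ .id := fun h => h2 ((hN.ident y hy n hn).1 h).symm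
    rw [hMy]
    rcases hM n h1 h2 with ⟨h, -, h'⟩ | ⟨h, -, h'⟩ | ⟨i, i', hi, hb', hi', hy', h⟩
    · rw [h]
      exact OkM_white H H hb hl h'
    · rw [h]
      exact OkM_black H H hb hl h'
    · rw [h, hb', hy']
      exact OkM_yyr ..
  have hflip : ∀ n < k, ∀ n' < k, OkM H H (M n) (L n n') (M n') →
      OkM H H (M n') (L n' n) (M n) := by
    intro n hn n' hn' h
    have := OkM_conv H H (OkM_cycle H H (OkM_conv H H h))
    rw [hN.conv n hn n' hn']
    simpa only [rbConv_conv] using this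
  refine ⟨M, hMx, hMy, fun n _ => hneid n, ?_, ?_, ?_, ?_⟩
  · intro n hn n' hn'
    by_cases hnn : n = n'
    · subst hnn
      rw [(hN.ident n hn n hn).2 rfl]
      exact OkM_id_right ..
    have hl : L n n' ≠ .id := fun h => hnn ((hN.ident n hn n' hn').1 h)
    have hxy : OkM H H (M x) (L x y) (M y) := by
      rw [hMx, hMy]
      exact OkM_cycle H H hok
    by_cases h1 : n = x
    · subst h1
      by_cases h2 : n' = y
      · subst h2; exact hxy
      · exact htx n' hn' (Ne.symm hnn) h2
    by_cases h2 : n = y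
    · subst h2
      by_cases h3 : n' = x
      · subst h3; exact hflip _ hn' _ hn hxy
      · exact hty n' hn' h3 (Ne.symm hnn)
    by_cases h3 : n' = x
    · subst h3
      exact hflip _ hn' _ hn (htx n hn h1 h2)
    by_cases h4 : n' = y
    · subst h4
      exact hflip _ hn' _ hn (hty n hn h1 h2)
    by_cases hrr : (∃ j j', M n = .red j j') ∧ ∃ j j', M n' = .red j j'
    · obtain ⟨i, i', hi, -, hi', hy', h⟩ := hred n h1 h2 hrr.1
      obtain ⟨l, l', hl, -, hl', hly', h'⟩ := hred n' h3 h4 hrr.2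
      have : i = l := by rw [hi] at hl; simpa using hl
      subst this
      rw [h, h', hcone n hn n' hn' hnn i' l' hi' hy' hl' hly']
      exact ⟨rfl, rfl, rfl⟩
    · exact OkM_wb H H (hcolour n h1 h2) (hcolour n' h3 h4) hrr hl
  · intro n _ h1 h2 i
    rcases hcolour n h1 h2 with h | h | ⟨_, _, h⟩ <;> rw [h] <;> simp
  · intro n _ h1 h2
    rcases hcolour n h1 h2 with h | h | ⟨_, _, h⟩ <;> rw [h] <;> simp
  · intro u hu v hv i hgu hyv
    have hu' : u = x ∨ u = y := by
      by_contra hcon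
      rw [not_or] at hcon
      rcases hcolour u hcon.1 hcon.2 with h | h | ⟨_, _, h⟩ <;> rw [h] at hgu <;> simp at hgu
    have hv' : v = x ∨ v = y := by
      by_contra hcon
      rw [not_or] at hcon
      rcases hcolour v hcon.1 hcon.2 with h | h | ⟨_, _, h⟩ <;> rw [h] at hyv <;> simp at hyv
    rcases hu' with rfl | rfl
    · rcases hv' with rfl | rfl
      · rw [hgu] at hyv; exact absurd hyv (by simp)
      · refine ⟨f, ⟨hf, hcone⟩, ?_⟩
        intro n hn i' h1 h2
        have hnu : n ≠ u := by rintro rfl; rw [hxx] at h1; exact absurd h1 (by simp)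
        have hnv : n ≠ v := by rintro rfl; rw [hyy] at h2; exact absurd h2 (by simp)
        have hai : a = .green i := by rw [hMx, conv_eq_green] at hgu; exact hgu
        have hbv : b = .yellow := by rw [hMy] at hyv; exact hyv
        rcases hM n hnu hnv with ⟨-, h, -⟩ | ⟨-, -, h⟩ | ⟨l, l', hl, -, hl', -, h⟩
        · exact absurd ⟨⟨i, hai⟩, i', h1⟩ h
        · exact absurd ⟨hbv, h2⟩ h
        · rw [hai] at hl
          rw [h1] at hl'
          simp only [RbAtom.green.injEq] at hl hl'
          rw [h, hl, hl']
    · rcases hv' with rfl | rfl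
      · exfalso
        rw [hMy] at hgu
        rw [hMx, conv_eq_yellow] at hyv
        exact hnc ⟨hyv, i, hgu⟩
      · rw [hgu] at hyv; exact absurd hyv (by simp)

theorem RbNet.exists_ext {k : ℕ} {L : ℕ → ℕ → RbAtom H.V H.V} (hN : RbNet H k L)
    {x y : ℕ} (hx : x < k) (hy : y < k) {a b : RbAtom H.V H.V}
    (hok : OkM H H a b (L x y)) (hno : ∀ z < k, ¬ (L x z = a ∧ L z y = b)) :
    ∃ M, RbExt H k L x y a b M := by
  by_cases hnc : a = .yellow ∧ ∃ i, b = .green i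
  · obtain ⟨M, hM⟩ := hN.exists_ext_aux (a := b.conv) (b := a.conv) hy hx
      (by rw [hN.conv x hx y hy]; exact OkM_conv H H hok)
      (by
        rintro z hz ⟨h1, h2⟩
        refine hno z hz ⟨?_, ?_⟩
        · rw [hN.conv z hz x hx, h2, rbConv_conv]
        · rw [hN.conv y hy z hz, h1, rbConv_conv])
      (by
        rintro ⟨-, i, hi⟩
        rw [hnc.1] at hi
        simp [RbAtom.conv] at hi)
    exact ⟨M, hM.right, by rw [hM.left, rbConv_conv], hM.ne_id, hM.tri,
      fun n hn h1 h2 => hM.not_green n hn h2 h1,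
      fun n hn h1 h2 => hM.not_yellow n hn h2 h1, hM.cone⟩
  · exact hN.exists_ext_aux hx hy hok hno hnc

/-- The labelling extended by the new node `k`. -/
def extLab (k : ℕ) (L : ℕ → ℕ → RbAtom H.V H.V) (M : ℕ → RbAtom H.V H.V) (u v : ℕ) :
    RbAtom H.V H.V :=
  if u = k then (if v = k then .id else M v) else if v = k then (M u).conv else L u v

theorem extLab_kk (k : ℕ) (L : ℕ → ℕ → RbAtom H.V H.V) (M : ℕ → RbAtom H.V H.V) :
    extLab k L M k k = .id := by simp [extLab]

theorem extLab_kn {k : ℕ} (L : ℕ → ℕ → RbAtom H.V H.V) (M : ℕ → RbAtom H.V H.V) {n : ℕ}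
    (hn : n < k) : extLab k L M k n = M n := by simp [extLab, hn.ne]

theorem extLab_nk {k : ℕ} (L : ℕ → ℕ → RbAtom H.V H.V) (M : ℕ → RbAtom H.V H.V) {n : ℕ}
    (hn : n < k) : extLab k L M n k = (M n).conv := by simp [extLab, hn.ne]

theorem extLab_nn {k : ℕ} (L : ℕ → ℕ → RbAtom H.V H.V) (M : ℕ → RbAtom H.V H.V) {n n' : ℕ}
    (hn : n < k) (hn' : n' < k) : extLab k L M n n' = L n n' := by
  simp [extLab, hn.ne, hn'.ne]

/-- Every partial homomorphism of size two extends. -/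
def TwoExt (H : BinStruct σ) : Prop :=
  ∀ (i i' j j' : H.V), i ≠ i' → PartialHom2 H H i i' j j' →
        ∃ f : H.V → H.V, IsHom H H f ∧ f i = j ∧ f i' = j'

theorem TwoExt.red (h2 : TwoExt H) {i i' : H.V} {a : RbAtom H.V H.V} (ha : a ≠ .id)
    (hg : OkM H H (.green i) (.green i') a) (hy : OkM H H .yellow .yellow a) :
    ∃ f, IsHom H H f ∧ a = .red (f i) (f i') := by
  cases a with
  | red j j' =>
    obtain ⟨f, hf, h1, h2⟩ := h2 i i' j j' hg.1 hg.2
    exact ⟨f, hf, by rw [h1, h2]⟩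
  | id => exact absurd rfl ha
  | _ => simp [OkM] at hg hy

theorem RbNet.extend (h2 : TwoExt H) {k : ℕ} {L : ℕ → ℕ → RbAtom H.V H.V} (hN : RbNet H k L)
    {x y : ℕ} (hx : x < k) (hy : y < k) {a b : RbAtom H.V H.V} {M : ℕ → RbAtom H.V H.V}
    (hM : RbExt H k L x y a b M) : RbNet H (k + 1) (extLab k L M) := by
  have hgr : ∀ n < k, ∀ i, M n = .green i → n = x ∨ n = y := by
    intro n hn i h
    by_contra hcon
    rw [not_or] at hcon
    exact hM.not_green n hn hcon.1 hcon.2 i h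
  have hye : ∀ n < k, M n = .yellow → n = x ∨ n = y := by
    intro n hn h
    by_contra hcon
    rw [not_or] at hcon
    exact hM.not_yellow n hn hcon.1 hcon.2 h
  have split : ∀ n, n < k + 1 → n < k ∨ n = k := fun n hn => by omega
  refine ⟨?_, ?_, ?_, ?_⟩
  · intro u hu v hv
    rcases split u hu with hu | rfl <;> rcases split v hv with hv | rfl
    · rw [extLab_nn _ _ hu hv]; exact hN.ident u hu v hv
    · rw [extLab_nk _ _ hu]
      exact ⟨fun h => absurd h (conv_ne_id.2 (hM.ne_id u hu)), fun h => absurd h hu.ne⟩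
    · rw [extLab_kn _ _ hv]
      exact ⟨fun h => absurd h (hM.ne_id v hv), fun h => absurd h.symm hv.ne⟩
    · rw [extLab_kk]; simp
  · intro u hu v hv
    rcases split u hu with hu | rfl <;> rcases split v hv with hv | rfl
    · rw [extLab_nn _ _ hu hv, extLab_nn _ _ hv hu]; exact hN.conv u hu v hv
    · rw [extLab_nk _ _ hu, extLab_kn _ _ hu, rbConv_conv]
    · rw [extLab_kn _ _ hv, extLab_nk _ _ hv]
    · rw [extLab_kk]; rfl
  · intro u hu v hv w hw
    rcases split u hu with hu | rfl <;> rcases split v hv with hv | rfl <;>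
      rcases split w hw with hw | rfl
    · rw [extLab_nn _ _ hu hv, extLab_nn _ _ hv hw, extLab_nn _ _ hu hw]
      exact hN.tri u hu v hv w hw
    · rw [extLab_nn _ _ hu hv, extLab_nk _ _ hv, extLab_nk _ _ hu]
      have := OkM_conv H H (hM.tri v hv u hu)
      rwa [← hN.conv v hv u hu] at this
    · rw [extLab_nk _ _ hu, extLab_kn _ _ hw, extLab_nn _ _ hu hw]
      exact OkM_cycle H H (hM.tri u hu w hw)
    · rw [extLab_nk _ _ hu, extLab_kk]
      exact OkM_id_right ..
    · rw [extLab_kn _ _ hv, extLab_kn _ _ hw, extLab_nn _ _ hv hw]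
      exact hM.tri v hv w hw
    · rw [extLab_kn _ _ hv, extLab_nk _ _ hv, extLab_kk, OkM_to_id_iff, rbConv_conv]
    · rw [extLab_kk, extLab_kn _ _ hw]
      exact OkM_id_left ..
    · rw [extLab_kk]
      exact OkM_id_left ..
  · intro u hu v hv
    rcases split u hu with hu | rfl <;> rcases split v hv with hv | rfl
    · -- both old
      have key : ∃ f, ConeHom H k L u v f ∧ ∀ i, M u = .green i → M v = .yellow →
          ∀ n < k, ∀ i', L u n = .green i' → L v n = .yellow → M n = .red (f i) (f i') := by
        by_cases hc : (∃ i, M u = .green i) ∧ M v = .yellow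
        · obtain ⟨⟨i, hi⟩, hyv⟩ := hc
          obtain ⟨f, hf, hf'⟩ := hM.cone u hu v hv i hi hyv
          refine ⟨f, hf, ?_⟩
          intro i1 hi1 _
          have : i = i1 := by rw [hi] at hi1; simpa using hi1
          rw [← this]
          exact hf'
        · obtain ⟨f, hf⟩ := hN.cone u hu v hv
          exact ⟨f, hf, fun i h h' => absurd ⟨⟨i, h⟩, h'⟩ hc⟩
      obtain ⟨f, ⟨hf, hf1⟩, hf2⟩ := key
      refine ⟨f, hf, ?_⟩
      intro n hn n' hn' hnn i i' e1 e2 e3 e4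
      rcases split n hn with hn | rfl <;> rcases split n' hn' with hn' | rfl
      · rw [extLab_nn _ _ hu hn] at e1
        rw [extLab_nn _ _ hv hn] at e2
        rw [extLab_nn _ _ hu hn'] at e3
        rw [extLab_nn _ _ hv hn'] at e4
        rw [extLab_nn _ _ hn hn']
        exact hf1 n hn n' hn' hnn i i' e1 e2 e3 e4
      · rw [extLab_nn _ _ hu hn] at e1
        rw [extLab_nn _ _ hv hn] at e2
        rw [extLab_nk _ _ hu, conv_eq_green] at e3
        rw [extLab_nk _ _ hv, conv_eq_yellow] at e4
        rw [extLab_nk _ _ hn, hf2 i' e3 e4 n hn i e1 e2]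
        rfl
      · rw [extLab_nk _ _ hu, conv_eq_green] at e1
        rw [extLab_nk _ _ hv, conv_eq_yellow] at e2
        rw [extLab_nn _ _ hu hn'] at e3
        rw [extLab_nn _ _ hv hn'] at e4
        rw [extLab_kn _ _ hn', hf2 i e1 e2 n' hn' i' e3 e4]
      · exact absurd rfl hnn
    · -- `v` is new
      by_cases hc : x ≠ y ∧ (∃ i, L u x = .green i) ∧ (∃ i, L u y = .green i) ∧
          M x = .yellow ∧ M y = .yellow
      · obtain ⟨hxy, ⟨i1, hi1⟩, ⟨i2, hi2⟩, hyx, hyy⟩ := hc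
        have t1 := hN.tri x hx u hu y hy
        rw [hN.conv u hu x hx, hi1, hi2] at t1
        have t2 := OkM_cycle H H (hM.tri x hx y hy)
        rw [hyx, hyy] at t2
        obtain ⟨f, hf, hred⟩ := h2.red (fun h => hxy ((hN.ident x hx y hy).1 h)) t1 t2
        have hred' : L y x = .red (f i2) (f i1) := by rw [hN.conv x hx y hy, hred]; rfl
        refine ⟨f, hf, ?_⟩
        intro n hn n' hn' hnn i i' e1 e2 e3 e4
        rcases split n hn with hn | rfl
        swap
        · rw [extLab_kk] at e2; exact absurd e2 (by simp)
        rcases split n' hn' with hn' | rfl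
        swap
        · rw [extLab_kk] at e4; exact absurd e4 (by simp)
        rw [extLab_nn _ _ hu hn] at e1
        rw [extLab_kn _ _ hn] at e2
        rw [extLab_nn _ _ hu hn'] at e3
        rw [extLab_kn _ _ hn'] at e4
        rw [extLab_nn _ _ hn hn']
        rcases hye n hn e2 with rfl | rfl <;> rcases hye n' hn' e4 with rfl | rfl
        · exact absurd rfl hnn
        · rw [hi1] at e1; rw [hi2] at e3
          simp only [RbAtom.green.injEq] at e1 e3
          rw [← e1, ← e3, hred]
        · rw [hi1] at e3; rw [hi2] at e1
          simp only [RbAtom.green.injEq] at e1 e3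
          rw [← e1, ← e3, hred']
        · exact absurd rfl hnn
      · refine ⟨fun i => i, fun _ _ _ _ h => h, ?_⟩
        intro n hn n' hn' hnn i i' e1 e2 e3 e4
        exfalso
        rcases split n hn with hn | rfl
        swap
        · rw [extLab_kk] at e2; exact absurd e2 (by simp)
        rcases split n' hn' with hn' | rfl
        swap
        · rw [extLab_kk] at e4; exact absurd e4 (by simp)
        rw [extLab_nn _ _ hu hn] at e1
        rw [extLab_kn _ _ hn] at e2
        rw [extLab_nn _ _ hu hn'] at e3
        rw [extLab_kn _ _ hn'] at e4
        rcases hye n hn e2 with rfl | rfl <;> rcases hye n' hn' e4 with rfl | rfl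
        · exact absurd rfl hnn
        · exact hc ⟨hnn, ⟨_, e1⟩, ⟨_, e3⟩, e2, e4⟩
        · exact hc ⟨hnn.symm, ⟨_, e3⟩, ⟨_, e1⟩, e4, e2⟩
        · exact absurd rfl hnn
    · -- `u` is new
      by_cases hc : x ≠ y ∧ (∃ i, M x = .green i) ∧ (∃ i, M y = .green i) ∧
          L v x = .yellow ∧ L v y = .yellow
      · obtain ⟨hxy, ⟨i1, hi1⟩, ⟨i2, hi2⟩, hyx, hyy⟩ := hc
        have t1 := OkM_cycle H H (hM.tri x hx y hy)
        rw [hi1, hi2] at t1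
        have t2 := hN.tri x hx v hv y hy
        rw [hN.conv v hv x hx, hyx, hyy] at t2
        obtain ⟨f, hf, hred⟩ := h2.red (fun h => hxy ((hN.ident x hx y hy).1 h)) t1 t2
        have hred' : L y x = .red (f i2) (f i1) := by rw [hN.conv x hx y hy, hred]; rfl
        refine ⟨f, hf, ?_⟩
        intro n hn n' hn' hnn i i' e1 e2 e3 e4
        rcases split n hn with hn | rfl
        swap
        · rw [extLab_kk] at e1; exact absurd e1 (by simp)
        rcases split n' hn' with hn' | rfl
        swap
        · rw [extLab_kk] at e3; exact absurd e3 (by simp)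
        rw [extLab_kn _ _ hn] at e1
        rw [extLab_nn _ _ hv hn] at e2
        rw [extLab_kn _ _ hn'] at e3
        rw [extLab_nn _ _ hv hn'] at e4
        rw [extLab_nn _ _ hn hn']
        rcases hgr n hn _ e1 with rfl | rfl <;> rcases hgr n' hn' _ e3 with rfl | rfl
        · exact absurd rfl hnn
        · rw [hi1] at e1; rw [hi2] at e3
          simp only [RbAtom.green.injEq] at e1 e3
          rw [← e1, ← e3, hred]
        · rw [hi1] at e3; rw [hi2] at e1
          simp only [RbAtom.green.injEq] at e1 e3
          rw [← e1, ← e3, hred']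
        · exact absurd rfl hnn
      · refine ⟨fun i => i, fun _ _ _ _ h => h, ?_⟩
        intro n hn n' hn' hnn i i' e1 e2 e3 e4
        exfalso
        rcases split n hn with hn | rfl
        swap
        · rw [extLab_kk] at e1; exact absurd e1 (by simp)
        rcases split n' hn' with hn' | rfl
        swap
        · rw [extLab_kk] at e3; exact absurd e3 (by simp)
        rw [extLab_kn _ _ hn] at e1
        rw [extLab_nn _ _ hv hn] at e2
        rw [extLab_kn _ _ hn'] at e3
        rw [extLab_nn _ _ hv hn'] at e4
        rcases hgr n hn _ e1 with rfl | rfl <;> rcases hgr n' hn' _ e3 with rfl | rfl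
        · exact absurd rfl hnn
        · exact hc ⟨hnn, ⟨_, e1⟩, ⟨_, e3⟩, e2, e4⟩
        · exact hc ⟨hnn.symm, ⟨_, e3⟩, ⟨_, e1⟩, e4, e2⟩
        · exact absurd rfl hnn
    · -- both new
      refine ⟨fun i => i, fun _ _ _ _ h => h, ?_⟩
      intro n hn n' hn' hnn i i' e1 e2 e3 e4
      rw [e1] at e2
      exact absurd e2 (by simp)

/-- Packed networks. -/
def PNet (H : BinStruct σ) : Type :=
  {p : ℕ × (ℕ → ℕ → RbAtom H.V H.V) // RbNet H p.1 p.2}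

theorem PNet.step (h2 : TwoExt H) (s : PNet H)
    (t : ℕ × ℕ × RbAtom H.V H.V × RbAtom H.V H.V) :
    ∃ s' : PNet H, s.1.1 ≤ s'.1.1 ∧
      (∀ u < s.1.1, ∀ v < s.1.1, s'.1.2 u v = s.1.2 u v) ∧
      (t.1 < s.1.1 → t.2.1 < s.1.1 → OkM H H t.2.2.1 t.2.2.2 (s.1.2 t.1 t.2.1) →
        ∃ z < s'.1.1, s'.1.2 t.1 z = t.2.2.1 ∧ s'.1.2 z t.2.1 = t.2.2.2) := by
  obtain ⟨⟨k, L⟩, hN⟩ := s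
  obtain ⟨x, y, a, b⟩ := t
  dsimp only at hN ⊢
  by_cases hc : x < k ∧ y < k ∧ OkM H H a b (L x y) ∧ ∀ z < k, ¬ (L x z = a ∧ L z y = b)
  · obtain ⟨hx, hy, hok, hno⟩ := hc
    obtain ⟨M, hM⟩ := hN.exists_ext hx hy hok hno
    refine ⟨⟨(k + 1, extLab k L M), hN.extend h2 hx hy hM⟩, Nat.le_succ k, ?_, ?_⟩
    · intro u hu v hv
      exact extLab_nn _ _ hu hv
    · intro _ _ _
      refine ⟨k, Nat.lt_succ_self k, ?_, ?_⟩
      · change extLab k L M x k = a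
        rw [extLab_nk _ _ hx, hM.left, rbConv_conv]
      · change extLab k L M k y = b
        rw [extLab_kn _ _ hy, hM.right]
  · refine ⟨⟨(k, L), hN⟩, le_rfl, fun _ _ _ _ => rfl, ?_⟩
    intro hx hy hok
    by_contra hcon
    exact hc ⟨hx, hy, hok, fun z hz h => hcon ⟨z, hz, h⟩⟩

/-- The one-node network. -/
def PNet.start (H : BinStruct σ) : PNet H :=
  ⟨(1, fun _ _ => .id), by
    refine ⟨?_, ?_, ?_, ?_⟩
    · intro x hx y hy
      dsimp only at hx hy
      simp only [true_iff]
      omega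
    · intro x _ y _; rfl
    · intro x _ y _ z _; exact OkM_id_left ..
    · intro x _ y _
      refine ⟨fun i => i, fun _ _ _ _ h => h, ?_⟩
      intro n _ n' _ _ i i' e
      exact absurd e (by simp)⟩

/-- A saturated labelled structure. -/
theorem exists_saturated [Finite H.V] (h2 : TwoExt H) :
    ∃ (X : Type) (N : X → X → RbAtom H.V H.V), Nonempty X ∧
      (∀ u v, N u v = .id ↔ u = v) ∧ (∀ u v, N v u = (N u v).conv) ∧
      (∀ u v w, OkM H H (N u v) (N v w) (N u w)) ∧
      (∀ u v a b, OkM H H a b (N u v) → ∃ w, N u w = a ∧ N w v = b) := by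
  have : Nonempty (RbAtom H.V H.V) := ⟨.id⟩
  obtain ⟨e, he⟩ := exists_surjective_nat (ℕ × ℕ × RbAtom H.V H.V × RbAtom H.V H.V)
  choose step hk hL hw using PNet.step (H := H) h2
  let S : ℕ → PNet H := fun n =>
    Nat.rec (PNet.start H) (fun n s => step s (e n.unpair.2)) n
  have hS : ∀ n, S (n + 1) = step (S n) (e n.unpair.2) := fun n => rfl
  have hmono : Monotone (fun n => (S n).1.1) :=
    monotone_nat_of_le_succ fun n => by rw [hS]; exact hk _ _
  have hagree : ∀ m d, ∀ u < (S m).1.1, ∀ v < (S m).1.1,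
      (S (m + d)).1.2 u v = (S m).1.2 u v := by
    intro m d u hu v hv
    induction d with
    | zero => rfl
    | succ d ih =>
      rw [← ih, ← Nat.add_assoc, hS]
      have := hmono (Nat.le_add_right m d)
      exact hL _ _ u (lt_of_lt_of_le hu this) v (lt_of_lt_of_le hv this)
  have hagree' : ∀ m m', m ≤ m' → ∀ u < (S m).1.1, ∀ v < (S m).1.1,
      (S m').1.2 u v = (S m).1.2 u v := by
    intro m m' hm
    obtain ⟨d, rfl⟩ := Nat.exists_eq_add_of_le hm
    exact hagree m d
  let X := {u : ℕ // ∃ m, u < (S m).1.1}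
  choose st hst using fun u : X => u.2
  let N : X → X → RbAtom H.V H.V := fun u v => (S (max (st u) (st v))).1.2 u.1 v.1
  have hN : ∀ (u v : X) m, u.1 < (S m).1.1 → v.1 < (S m).1.1 → N u v = (S m).1.2 u.1 v.1 := by
    intro u v m hu hv
    have hu' : u.1 < (S (max (st u) (st v))).1.1 :=
      lt_of_lt_of_le (hst u) (hmono (le_max_left _ _))
    have hv' : v.1 < (S (max (st u) (st v))).1.1 :=
      lt_of_lt_of_le (hst v) (hmono (le_max_right _ _))
    rcases le_total m (max (st u) (st v)) with h | h
    · exact hagree' _ _ h _ hu _ hv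
    · exact (hagree' _ _ h _ hu' _ hv').symm
  have hcommon : ∀ u v w : X, ∃ m, u.1 < (S m).1.1 ∧ v.1 < (S m).1.1 ∧ w.1 < (S m).1.1 := by
    intro u v w
    refine ⟨max (st u) (max (st v) (st w)), ?_, ?_, ?_⟩
    · exact lt_of_lt_of_le (hst u) (hmono (le_max_left _ _))
    · exact lt_of_lt_of_le (hst v) (hmono ((le_max_left _ _).trans (le_max_right _ _)))
    · exact lt_of_lt_of_le (hst w) (hmono ((le_max_right _ _).trans (le_max_right _ _)))
  refine ⟨X, N, ⟨⟨0, 0, Nat.zero_lt_one⟩⟩, ?_, ?_, ?_, ?_⟩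
  · intro u v
    obtain ⟨m, hu, hv, -⟩ := hcommon u v v
    rw [hN u v m hu hv, (S m).2.ident _ hu _ hv, Subtype.ext_iff]
  · intro u v
    obtain ⟨m, hu, hv, -⟩ := hcommon u v v
    rw [hN u v m hu hv, hN v u m hv hu, (S m).2.conv _ hu _ hv]
  · intro u v w
    obtain ⟨m, hu, hv, hw⟩ := hcommon u v w
    rw [hN u v m hu hv, hN v w m hv hw, hN u w m hu hw]
    exact (S m).2.tri _ hu _ hv _ hw
  · intro u v a b hok
    obtain ⟨m, hu, hv, -⟩ := hcommon u v v
    obtain ⟨t, ht⟩ := he (u.1, v.1, a, b)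
    have hle := hmono (Nat.left_le_pair m t)
    have hu' := lt_of_lt_of_le hu hle
    have hv' := lt_of_lt_of_le hv hle
    have hw' := hw (S (Nat.pair m t)) (e (Nat.pair m t).unpair.2)
    rw [← hS, Nat.unpair_pair, ht] at hw'
    rw [hN u v _ hu' hv'] at hok
    obtain ⟨z, hz, hz1, hz2⟩ := hw' hu' hv' hok
    have hle2 := hmono (Nat.le_succ (Nat.pair m t))
    refine ⟨⟨z, Nat.pair m t + 1, hz⟩, ?_, ?_⟩
    · rw [hN u ⟨z, Nat.pair m t + 1, hz⟩ (Nat.pair m t + 1) (lt_of_lt_of_le hu' hle2) hz]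
      exact hz1
    · rw [hN ⟨z, Nat.pair m t + 1, hz⟩ v (Nat.pair m t + 1) hz (lt_of_lt_of_le hv' hle2)]
      exact hz2

theorem rb_rep [Finite H.V] (h2 : TwoExt H) (hp : PairHom H H) :
    @Representable _ (rbRA H H hp) := by
  obtain ⟨X, N, ⟨x0⟩, hid, hcv, htri, hsat⟩ := exists_saturated h2
  have hall : ∀ a, ∃ u v, N u v = a := by
    intro a
    have : OkM H H a a.conv (N x0 x0) := by
      rw [(hid x0 x0).2 rfl, OkM_to_id_iff, rbConv_conv]
    obtain ⟨w, hw, -⟩ := hsat _ _ _ _ this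
    exact ⟨x0, w, hw⟩
  refine ⟨X, fun A => {p | N p.1 p.2 ∈ A}, ?_, ?_, ?_, ?_, ?_, ?_⟩
  · intro A B hAB
    ext a
    obtain ⟨u, v, rfl⟩ := hall a
    have : (u, v) ∈ {p : X × X | N p.1 p.2 ∈ A} ↔ (u, v) ∈ {p : X × X | N p.1 p.2 ∈ B} := by
      rw [show {p : X × X | N p.1 p.2 ∈ A} = {p : X × X | N p.1 p.2 ∈ B} from hAB]
    exact this
  · intro A B
    rfl
  · intro A
    ext p
    exact ⟨fun h => ⟨trivial, h⟩, fun h => h.2⟩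
  · intro A B
    ext ⟨u, v⟩
    change N u v ∈ rbComp H H A B ↔ ∃ z, N u z ∈ A ∧ N z v ∈ B
    rw [mem_rbComp]
    constructor
    · rintro ⟨a, ha, b, hb, hok⟩
      obtain ⟨w, rfl, rfl⟩ := hsat _ _ _ _ hok
      exact ⟨w, ha, hb⟩
    · rintro ⟨z, h1, h2⟩
      exact ⟨_, h1, _, h2, htri u z v⟩
  · intro A
    ext ⟨u, v⟩
    change (N u v).conv ∈ A ↔ N v u ∈ A
    rw [hcv u v]
  · ext ⟨u, v⟩
    exact hid u v

end RbRep

theorem rra_not_c_variable_axiomatisable {σ : Type} (G H : BinStruct σ)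
    [Finite G.V] [Finite H.V] (c : ℕ)
    (h1 : ExSurvives G H (c + 3) (fun _ => ∅) (fun _ => ∅))
    (h2 : ∀ (i i' j j' : H.V), i ≠ i' → PartialHom2 H H i i' j j' →
        ∃ f : H.V → H.V, IsHom H H f ∧ f i = j ∧ f i' = j')
    (h3 : ∃ (i i' : G.V) (j j' : H.V), i ≠ i' ∧ PartialHom2 G H i i' j j' ∧
        ¬ ∃ f : G.V → H.V, IsHom G H f ∧ f i = j ∧ f i' = j') :
    ¬ ∃ T : Set (RAFormula c), (∀ φ ∈ T, φ.freeVars = ∅) ∧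
        ∀ (A : Type) [RelationAlgebra A],
          (Representable A ↔ ∀ φ ∈ T, RAFormula.Sat (RAOps.ofClass A) (fun _ => ⊥) φ) := by
  rintro ⟨T, -, hT⟩
  obtain ⟨Inv, hI, h0⟩ := exists_goodInv h1
  have hpG : PairHom G H := hI.pairHom h0
  have hpH : PairHom H H := fun i i' _ => ⟨i, i', fun _ => ⟨fun h => h, fun h => h⟩⟩
  have hrep := rb_rep (H := H) h2 hpH
  refine rb_not_rep G H hpG h3 ?_
  refine (@hT _ (rbRA G H hpG)).2 ?_
  intro φ hφ
  have := (@hT _ (rbRA H H hpH)).1 hrep φ hφ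
  exact (rb_equiv (F := H) hI h0 φ).2 this
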